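/- arXiv:2409.04028 — 4 statements merged into one kernel-verified Lean document; each statement's English description precedes it below -/
import Mathlib

section
/- Let f : 𝔹 → ℂ be holomorphic, F(x) = f(x)·x and assume F is biholomorphic on 𝔹 (so F is of the form a + f(x)x with a = 0; the same statement holds for F(x) = a + f(x)x with a ∈ X). Then (1/4)·‖DF(0)‖ ≤ dist(F(0), ∂F(𝔹)), where DF(0) is the Fréchet derivative of F at 0 and dist(F(0), ∂F(𝔹)) is the distance from F(0) to the boundary of the image F(𝔹). -/
open Metric Set

noncomputable section

/-- A holomorphic map is biholomorphic on an open set `s` if it is holomorphic and injective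
on `s` and admits a holomorphic inverse on the image `f '' s`. -/
def IsBiholoOn {E₁ E₂ : Type*} [NormedAddCommGroup E₁] [NormedSpace ℂ E₁]
    [NormedAddCommGroup E₂] [NormedSpace ℂ E₂] (f : E₁ → E₂) (s : Set E₁) : Prop :=
  DifferentiableOn ℂ f s ∧ Set.InjOn f s ∧
    ∃ g : E₂ → E₁, DifferentiableOn ℂ g (f '' s) ∧ ∀ x ∈ s, g (f x) = x


lemma kdet (a c : ℂ) (L : ℂ →L[ℝ] ℂ) (hL : ∀ z, L z = a * z + c * (starRingEnd ℂ) z) :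
    L.det = ‖a‖ ^ 2 - ‖c‖ ^ 2 := by
  have : L.det = LinearMap.det (L : ℂ →ₗ[ℝ] ℂ) := rfl
  rw [this, ← LinearMap.det_toMatrix Complex.basisOneI, Matrix.det_fin_two]
  simp [LinearMap.toMatrix_apply, hL, Complex.sq_norm, Complex.normSq_apply]
  ring

lemma kmean (H : ℂ → ℂ) (hH : DifferentiableOn ℂ H (ball 0 1)) (h0 : H 0 = 0) (ρ : ℝ)
    (h1 : 0 < ρ) (h2 : ρ < 1) :
    ∫ θ in (-Real.pi)..Real.pi, H (circleMap 0 ρ θ) = 0 := by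
  have hc : DiffContOnCl ℂ H (ball 0 |ρ|) := by
    apply DifferentiableOn.diffContOnCl
    apply hH.mono
    rw [abs_of_pos h1, closure_ball _ h1.ne']
    exact closedBall_subset_ball h2
  have := hc.circleAverage
  rw [h0, Real.circleAverage] at this
  have h3 : ∫ θ in (0:ℝ)..(2 * Real.pi), H (circleMap 0 ρ θ) = 0 := by
    rcases smul_eq_zero.1 this with h | h
    · exact absurd h (by positivity)
    · exact h
  have hp : Function.Periodic (fun θ => H (circleMap 0 ρ θ)) (2 * Real.pi) :=
    fun θ => by simp [periodic_circleMap 0 ρ θ]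
  have := hp.intervalIntegral_add_eq (-Real.pi) 0
  rw [zero_add, h3] at this
  rwa [show -Real.pi + 2 * Real.pi = Real.pi by ring] at this

lemma kpoint (z b q : ℂ) (hz : z ≠ 0) :
    1 / ‖z‖ ^ 4 + ‖b‖ ^ 2 + 2 * (-b * z ^ 2 / (‖z‖ : ℂ) ^ 4 - z ^ 2 * q / (‖z‖ : ℂ) ^ 4
      + (starRingEnd ℂ) b * q).re ≤ ‖-(z ^ 2)⁻¹ + (b + q)‖ ^ 2 := by
  have hi : (z ^ 2)⁻¹ = (starRingEnd ℂ) (z ^ 2) / (‖z‖ : ℂ) ^ 4 := by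
    rw [Complex.inv_def, Complex.normSq_eq_norm_sq, norm_pow]
    push_cast
    rw [div_eq_mul_inv]; ring
  have e1 : ‖-(z ^ 2)⁻¹ + (b + q)‖ ^ 2 = 1 / ‖z‖ ^ 4 + ‖b + q‖ ^ 2
      + 2 * (-(z ^ 2)/ (‖z‖ : ℂ) ^ 4 * (b + q)).re := by
    have hn : ‖z‖ ≠ 0 := norm_ne_zero_iff.2 hz
    have h1 : 1 / ‖z‖ ^ 4 = ‖(z^2)⁻¹‖ ^ 2 := by
      rw [norm_inv, norm_pow]; field_simp
    rw [h1]
    have h2 : -(z ^ 2)/ (‖z‖ : ℂ) ^ 4 = - (starRingEnd ℂ) ((z ^ 2)⁻¹) := by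
      rw [hi]; simp [neg_div]
    rw [h2]
    simp only [Complex.sq_norm, Complex.normSq_apply, Complex.add_re, Complex.add_im,
      Complex.neg_re, Complex.neg_im, Complex.mul_re, Complex.conj_re, Complex.conj_im]
    ring
  have e2 : ‖b + q‖ ^ 2 = ‖b‖ ^ 2 + ‖q‖ ^ 2 + 2 * ((starRingEnd ℂ) b * q).re := by
    simp only [Complex.sq_norm, Complex.normSq_apply, Complex.add_re, Complex.add_im,
      Complex.mul_re, Complex.conj_re, Complex.conj_im]
    ring
  rw [e1, e2]
  have : -b * z ^ 2 / (‖z‖ : ℂ) ^ 4 - z ^ 2 * q / (‖z‖ : ℂ) ^ 4 + (starRingEnd ℂ) b * q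
    = -(z ^ 2)/ (‖z‖ : ℂ) ^ 4 * (b + q) + (starRingEnd ℂ) b * q := by ring
  rw [this, Complex.add_re]
  nlinarith [sq_nonneg ‖q‖]

lemma kinner (n : ℂ → ℂ) (hn : DifferentiableOn ℂ n (ball 0 1)) (ρ : ℝ)
    (h1 : 0 < ρ) (h2 : ρ < 1) :
    2 * Real.pi * (1 / ρ ^ 4 + ‖n 0‖ ^ 2) ≤
    ∫ θ in (-Real.pi)..Real.pi, ‖-((circleMap 0 ρ θ) ^ 2)⁻¹ + n (circleMap 0 ρ θ)‖ ^ 2 := by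
  set b := n 0
  let H : ℂ → ℂ := fun z => -b * z ^ 2 / (ρ : ℂ) ^ 4 - z ^ 2 * (n z - b) / (ρ : ℂ) ^ 4
      + (starRingEnd ℂ) b * (n z - b)
  have hH : DifferentiableOn ℂ H (ball 0 1) := by
    have hq : DifferentiableOn ℂ (fun z => n z - b) (ball 0 1) := hn.sub_const _
    refine DifferentiableOn.add (DifferentiableOn.sub ?_ ?_) ?_
    · fun_prop
    · exact ((differentiableOn_id.pow 2).mul hq).div_const _
    · exact hq.const_mul _
  have hm := kmean H hH (by simp [H, b]) ρ h1 h2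
  have hcm : ∀ θ, circleMap 0 ρ θ ∈ ball (0:ℂ) 1 := fun θ => by
    simp [abs_of_pos h1, h2]
  have hcont : Continuous (fun θ => H (circleMap 0 ρ θ)) :=
    hH.continuousOn.comp_continuous (continuous_circleMap 0 ρ) hcm
  have hncont : Continuous (fun θ => n (circleMap 0 ρ θ)) :=
    hn.continuousOn.comp_continuous (continuous_circleMap 0 ρ) hcm
  have hne : ∀ θ, circleMap 0 ρ θ ≠ 0 := fun θ => circleMap_ne_center h1.ne'
  have hre : ∫ θ in (-Real.pi)..Real.pi, (H (circleMap 0 ρ θ)).re = 0 := by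
    have := Complex.reCLM.intervalIntegral_comp_comm (hcont.intervalIntegrable (-Real.pi) Real.pi)
      (μ := MeasureTheory.volume)
    rw [hm] at this
    simpa using this
  have e : ∫ θ in (-Real.pi)..Real.pi, ((1 / ρ ^ 4 + ‖b‖ ^ 2) + 2 * (H (circleMap 0 ρ θ)).re)
      = 2 * Real.pi * (1 / ρ ^ 4 + ‖b‖ ^ 2) := by
    rw [intervalIntegral.integral_add, intervalIntegral.integral_const_mul, hre]
    · simp; ring
    · simp
    · exact (continuous_const.mul (Complex.continuous_re.comp hcont)).intervalIntegrable _ _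
  rw [← e]
  apply intervalIntegral.integral_mono_on (by linarith [Real.pi_pos])
  · exact (continuous_const.add
      (continuous_const.mul (Complex.continuous_re.comp hcont))).intervalIntegrable _ _
  · apply Continuous.intervalIntegrable
    have : Continuous fun θ => ((circleMap 0 ρ θ) ^ 2)⁻¹ :=
      ((continuous_circleMap 0 ρ).pow 2).inv₀ (fun θ => pow_ne_zero 2 (hne θ))
    exact ((this.neg.add hncont).norm).pow 2
  · intro θ _
    have := kpoint (circleMap 0 ρ θ) b (n (circleMap 0 ρ θ) - b) (hne θ)
    have hnm : ‖circleMap 0 ρ θ‖ = ρ := by simp [abs_of_pos h1]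
    rw [hnm] at this
    simpa [H] using this

open MeasureTheory in
lemma klower (n : ℂ → ℂ) (hn : DifferentiableOn ℂ n (ball 0 1)) (r R : ℝ)
    (h1 : 0 < r) (h2 : r < R) (h3 : R < 1) :
    Real.pi * (1 / r ^ 2 - 1 / R ^ 2 + ‖n 0‖ ^ 2 * (R ^ 2 - r ^ 2)) ≤
    ∫ z in {z : ℂ | r < ‖z‖ ∧ ‖z‖ < R}, ‖-(z ^ 2)⁻¹ + n z‖ ^ 2 := by
  set u : ℂ → ℝ := fun z => ‖-(z ^ 2)⁻¹ + n z‖ ^ 2 with hu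
  have hA : MeasurableSet {z : ℂ | r < ‖z‖ ∧ ‖z‖ < R} :=
    ((isOpen_lt continuous_const continuous_norm).inter
      (isOpen_lt continuous_norm continuous_const)).measurableSet
  have hmap : ∀ p : ℝ × ℝ, Complex.polarCoord.symm p = circleMap 0 p.1 p.2 := fun p => by
    rw [Complex.polarCoord_symm_apply, circleMap, Complex.exp_mul_I]; simp
  have hS : MeasurableSet (Ioo r R ×ˢ Ioo (-Real.pi) Real.pi) :=
    measurableSet_Ioo.prod measurableSet_Ioo
  have hc : ContinuousOn (fun p : ℝ × ℝ => p.1 * u (circleMap 0 p.1 p.2))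
      (Icc r R ×ˢ Icc (-Real.pi) Real.pi) := by
    have hcm : Continuous (fun p : ℝ × ℝ => circleMap 0 p.1 p.2) := by
      unfold circleMap; fun_prop
    apply continuousOn_fst.mul
    apply ContinuousOn.pow
    apply ContinuousOn.norm
    apply ContinuousOn.add
    · apply ContinuousOn.neg
      apply ContinuousOn.inv₀ (hcm.pow 2).continuousOn
      rintro p ⟨hp, _⟩
      exact pow_ne_zero 2 (circleMap_ne_center (h1.trans_le hp.1).ne')
    · apply hn.continuousOn.comp hcm.continuousOn
      rintro p ⟨hp, _⟩
      have : 0 < p.1 := h1.trans_le hp.1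
      simp [abs_of_pos this, hp.2.trans_lt h3]
  have hintg : IntegrableOn (fun p : ℝ × ℝ => p.1 * u (circleMap 0 p.1 p.2))
      (Ioo r R ×ˢ Ioo (-Real.pi) Real.pi) (volume.prod volume) :=
    (hc.integrableOn_compact (isCompact_Icc.prod isCompact_Icc)).mono_set
      (prod_mono Ioo_subset_Icc_self Ioo_subset_Icc_self)
  have e1 : ∫ z in {z : ℂ | r < ‖z‖ ∧ ‖z‖ < R}, u z =
      ∫ p in Ioo r R ×ˢ Ioo (-Real.pi) Real.pi, p.1 * u (circleMap 0 p.1 p.2)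
        ∂(volume.prod volume) := by
    rw [← integral_indicator hA, ← Complex.integral_comp_polarCoord_symm, polarCoord_target,
      ← integral_indicator (measurableSet_Ioi.prod measurableSet_Ioo), ← integral_indicator hS]
    congr 1
    ext p
    simp only [hmap]
    by_cases hp : p ∈ Ioo r R ×ˢ Ioo (-Real.pi) Real.pi
    · have hp0 : 0 < p.1 := h1.trans hp.1.1
      have : p ∈ Ioi (0:ℝ) ×ˢ Ioo (-Real.pi) Real.pi := ⟨hp0, hp.2⟩
      rw [indicator_of_mem hp, indicator_of_mem this, indicator_of_mem, smul_eq_mul]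
      simpa [abs_of_pos hp0] using hp.1
    · rw [indicator_of_notMem hp]
      by_cases hq : p ∈ Ioi (0:ℝ) ×ˢ Ioo (-Real.pi) Real.pi
      · rw [indicator_of_mem hq, indicator_of_notMem, smul_zero]
        intro h
        have hp0 : 0 < p.1 := hq.1
        apply hp
        refine ⟨?_, hq.2⟩
        simpa [abs_of_pos hp0] using h
      · rw [indicator_of_notMem hq]
  rw [e1, setIntegral_prod _ hintg]
  have e2 : ∫ ρ in Ioo r R, 2 * Real.pi * (1 / ρ ^ 3 + ‖n 0‖ ^ 2 * ρ) =
      Real.pi * (1 / r ^ 2 - 1 / R ^ 2 + ‖n 0‖ ^ 2 * (R ^ 2 - r ^ 2)) := by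
    rw [← integral_Ioc_eq_integral_Ioo, ← intervalIntegral.integral_of_le h2.le]
    rw [intervalIntegral.integral_eq_sub_of_hasDerivAt
      (f := fun ρ => Real.pi * (- (ρ ^ 2)⁻¹ + ‖n 0‖ ^ 2 * ρ ^ 2))]
    · simp only [one_div]; ring
    · intro x hx
      rw [uIcc_of_le h2.le] at hx
      have hx0 : x ≠ 0 := (h1.trans_le hx.1).ne'
      have := ((((hasDerivAt_pow 2 x).inv (pow_ne_zero 2 hx0)).neg.add
        ((hasDerivAt_pow 2 x).const_mul (‖n 0‖ ^ 2))).const_mul Real.pi)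
      refine HasDerivAt.congr_deriv (f := fun ρ => Real.pi * (- (ρ ^ 2)⁻¹ + ‖n 0‖ ^ 2 * ρ ^ 2))
        this ?_
      simp only [Nat.cast_ofNat]
      field_simp
      simp
    · apply ContinuousOn.intervalIntegrable
      rw [uIcc_of_le h2.le]
      intro x hx
      have hx0 : x ≠ 0 := (h1.trans_le hx.1).ne'
      apply ContinuousAt.continuousWithinAt
      have : x ^ 3 ≠ 0 := pow_ne_zero 3 hx0
      fun_prop (disch := assumption)
  rw [← e2]
  apply setIntegral_mono_on
  · have : ContinuousOn (fun ρ : ℝ => 2 * Real.pi * (1 / ρ ^ 3 + ‖n 0‖ ^ 2 * ρ)) (Icc r R) := by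
      intro x hx
      have hx0 : x ≠ 0 := (h1.trans_le hx.1).ne'
      apply ContinuousAt.continuousWithinAt
      have : x ^ 3 ≠ 0 := pow_ne_zero 3 hx0
      fun_prop (disch := assumption)
    exact (this.integrableOn_compact isCompact_Icc).mono_set Ioo_subset_Icc_self
  · rw [IntegrableOn, ← Measure.prod_restrict] at hintg
    exact hintg.integral_prod_left
  · exact measurableSet_Ioo
  · intro ρ hρ
    have hρ0 : 0 < ρ := h1.trans hρ.1
    have := kinner n hn ρ hρ0 (hρ.2.trans h3)
    rw [integral_const_mul, ← integral_Ioc_eq_integral_Ioo, ← intervalIntegral.integral_of_le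
      (by linarith [Real.pi_pos])]
    calc _ = ρ * (2 * Real.pi * (1 / ρ ^ 4 + ‖n 0‖ ^ 2)) := by field_simp
      _ ≤ _ := by gcongr

noncomputable def kphi (m : ℂ → ℂ) (z : ℂ) : ℂ := z⁻¹ + z * m z

lemma kphi_diff (m : ℂ → ℂ) (hm : DifferentiableOn ℂ m (ball 0 1)) :
    DifferentiableOn ℂ (kphi m) (ball 0 1 \ {0}) := by
  apply DifferentiableOn.add
  · intro z hz
    exact (differentiableAt_inv hz.2).differentiableWithinAt
  · exact differentiableOn_id.mul (hm.mono sdiff_subset)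

open Filter Topology in
lemma kphi_reach (m : ℂ → ℂ) (hm : DifferentiableOn ℂ m (ball 0 1)) (r : ℝ) (hr : 0 < r)
    (w : ℂ) (hw : w ≠ 0) : ∃ t : ℝ, 1 ≤ t ∧ ∃ z, 0 < ‖z‖ ∧ ‖z‖ < r ∧ kphi m z = t * w := by
  have han : AnalyticAt ℂ m 0 := hm.analyticAt (isOpen_ball.mem_nhds (by simp))
  have hP : AnalyticAt ℂ (fun z => 1 + z ^ 2 * m z) 0 :=
    analyticAt_const.add ((analyticAt_id.pow 2).mul han)
  let Q : ℂ → ℂ := fun z => z / (1 + z ^ 2 * m z)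
  have hQ : AnalyticAt ℂ Q 0 := analyticAt_id.div hP (by simp)
  have hd : HasStrictDerivAt Q (deriv Q 0) 0 := hQ.hasStrictDerivAt
  have hd1 : deriv Q 0 = 1 := by
    have h := (hasDerivAt_id (0:ℂ)).div hP.differentiableAt.hasDerivAt (by simp)
    have h' : HasDerivAt Q _ 0 := h
    rw [h'.deriv]; simp
  have hmap := hd.map_nhds_eq (by rw [hd1]; exact one_ne_zero)
  have hQ0 : Q 0 = 0 := by simp [Q]
  rw [hQ0] at hmap
  have hmem : Q '' (ball 0 r) ∈ 𝓝 (0:ℂ) := by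
    rw [← hmap]; exact image_mem_map (ball_mem_nhds _ hr)
  have ht : Tendsto (fun t : ℝ => ((t : ℂ) * w)⁻¹) atTop (𝓝 0) := by
    have : Tendsto (fun t : ℝ => (((t⁻¹ : ℝ) : ℂ)) * w⁻¹) atTop (𝓝 (((0:ℝ):ℂ) * w⁻¹)) :=
      ((Complex.continuous_ofReal.tendsto 0).comp tendsto_inv_atTop_zero).mul_const _
    simpa [mul_inv, mul_comm] using this
  obtain ⟨t, ht1, ht2⟩ := ((eventually_ge_atTop (1:ℝ)).and (ht.eventually hmem)).exists
  obtain ⟨z, hz, hzt⟩ := ht2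
  have htw : (t : ℂ) * w ≠ 0 := mul_ne_zero (by
    have : (t:ℝ) ≠ 0 := by linarith
    exact_mod_cast this) hw
  have hz0 : z ≠ 0 := by
    rintro rfl
    rw [hQ0] at hzt
    exact htw (inv_eq_zero.1 hzt.symm)
  refine ⟨t, ht1, z, norm_pos_iff.2 hz0, by simpa using hz, ?_⟩
  rw [← inv_inv ((t:ℂ) * w), ← hzt]
  simp only [Q, kphi, inv_div]
  field_simp

open Filter Topology in
lemma kcontain (m : ℂ → ℂ) (hm : DifferentiableOn ℂ m (ball 0 1))
    (hinj : InjOn (kphi m) (ball 0 1 \ {0})) (r ρ : ℝ) (hr : 0 < r) (hr1 : r < 1) (hρ : 0 ≤ ρ)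
    (N : ℂ → ℝ) (hN0 : N 0 = 0) (hN : ∀ (t : ℝ) (w : ℂ), 1 ≤ t → N (t * w) = t * N w)
    (hb : ∀ z, ‖z‖ = r → N (kphi m z) ≤ ρ) (z₀ : ℂ) (h1 : r < ‖z₀‖) (h2 : ‖z₀‖ < 1) :
    N (kphi m z₀) ≤ ρ := by
  by_contra! hcon
  set w := kphi m z₀ with hw
  have hw0 : w ≠ 0 := by
    intro h; rw [h, hN0] at hcon; linarith
  have hdiff := kphi_diff m hm
  have hop : IsOpen (ball (0:ℂ) 1 \ {0}) := isOpen_ball.sdiff isClosed_singleton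
  let U : Set ℂ := ball 0 r \ {0}
  have hUop : IsOpen U := isOpen_ball.sdiff isClosed_singleton
  have hUsub : U ⊆ ball (0:ℂ) 1 \ {0} := sdiff_subset_sdiff_left (ball_subset_ball hr1.le)
  let W : Set ℂ := kphi m '' U
  have hW : IsOpen W := by
    rw [isOpen_iff_mem_nhds]
    rintro _ ⟨z, hz, rfl⟩
    have han : AnalyticAt ℂ (kphi m) z := hdiff.analyticAt (hop.mem_nhds (hUsub hz))
    rcases han.eventually_constant_or_nhds_le_map_nhds with h | h
    · exfalso
      have h' : ∀ᶠ y in 𝓝 z, y = z := by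
        filter_upwards [h, hop.mem_nhds (hUsub hz)] with y hy hy2
        exact hinj hy2 (hUsub hz) hy
      have : ∀ᶠ y in 𝓝[≠] z, False := by
        filter_upwards [h'.filter_mono nhdsWithin_le_nhds, self_mem_nhdsWithin] with y a c
        exact c a
      exact (NormedField.nhdsNE_neBot z).ne (by simpa using this)
    · exact h (image_mem_map (hUop.mem_nhds hz))
  let S : Set ℂ := (fun t : ℝ => (t : ℂ) * w) '' Ici 1
  have hS : IsPreconnected S := isPreconnected_Ici.image _ (by fun_prop)
  have hSW : S ⊆ W := by
    apply hS.subset_of_closure_inter_subset hW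
    · obtain ⟨t, ht, z, hz1, hz2, hz3⟩ := kphi_reach m hm r hr w hw0
      refine ⟨t * w, ⟨t, ht, rfl⟩, z, ⟨by simpa using hz2, ?_⟩, hz3⟩
      simpa using hz1
    · rintro v ⟨hv, t, ht, rfl⟩
      have hNv : ρ < N (t * w) := by
        rw [hN t w ht]
        have : (1:ℝ) ≤ t := ht
        nlinarith
      dsimp only at hv ⊢
      set v := (t:ℂ) * w
      have htend : Tendsto (fun z => ‖kphi m z‖) (𝓝[≠] 0) atTop := by
        have hc : ContinuousAt (fun z => z * m z) 0 :=
          continuousAt_id.mul (hm.continuousOn.continuousAt (isOpen_ball.mem_nhds (by simp)))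
        have hc2 := hc.tendsto.mono_left (nhdsWithin_le_nhds (s := {0}ᶜ))
        have h5 : Tendsto (fun z : ℂ => ‖z⁻¹‖ + -‖z * m z‖) (𝓝[≠] 0) atTop :=
          (tendsto_norm_cobounded_atTop.comp tendsto_inv₀_nhdsNE_zero).atTop_add hc2.norm.neg
        refine tendsto_atTop_mono (fun z => ?_) h5
        have := norm_sub_norm_le (z⁻¹) (-(z * m z))
        rw [norm_neg, sub_neg_eq_add] at this
        simpa [kphi, sub_eq_add_neg] using this
      have hev : ∀ᶠ z in 𝓝[≠] (0:ℂ), ‖v‖ + 1 ≤ ‖kphi m z‖ :=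
        htend.eventually_ge_atTop _
      rw [eventually_nhdsWithin_iff, Metric.eventually_nhds_iff] at hev
      obtain ⟨ε, hε, hev⟩ := hev
      let K : Set ℂ := closedBall 0 r \ ball 0 ε
      have hK : IsCompact K := (isCompact_closedBall 0 r).diff isOpen_ball
      have hKsub : K ⊆ ball (0:ℂ) 1 \ {0} := by
        rintro z ⟨hz1, hz2⟩
        refine ⟨closedBall_subset_ball hr1 hz1, ?_⟩
        rintro rfl
        exact hz2 (by simpa using hε)
      have hKc : IsClosed (kphi m '' K) := (hK.image_of_continuousOn
        (hdiff.continuousOn.mono hKsub)).isClosed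
      have hcl : IsClosed (kphi m '' K ∪ {y | ‖v‖ + 1 ≤ ‖y‖}) :=
        hKc.union (isClosed_le continuous_const continuous_norm)
      have hWs : W ⊆ kphi m '' K ∪ {y | ‖v‖ + 1 ≤ ‖y‖} := by
        rintro _ ⟨z, hz, rfl⟩
        by_cases h : z ∈ ball (0:ℂ) ε
        · exact Or.inr (hev h hz.2)
        · exact Or.inl ⟨z, ⟨ball_subset_closedBall hz.1, h⟩, rfl⟩
      rcases closure_minimal hWs hcl hv with h | h
      · obtain ⟨z, hz, hzv⟩ := h
        refine ⟨z, ⟨?_, (hKsub hz).2⟩, hzv⟩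
        have h3 : ‖z‖ ≤ r := by simpa using hz.1
        rcases h3.lt_or_eq with h4 | h4
        · simpa using h4
        · have := hb z h4
          rw [hzv] at this
          linarith
      · have : ‖v‖ + 1 ≤ ‖v‖ := h
        linarith
  obtain ⟨z, hz, hzw⟩ := hSW ⟨1, by simp, rfl⟩
  have hz1 : kphi m z = kphi m z₀ := by rw [hzw, ← hw]; simp
  have h3 := hinj (hUsub hz) ⟨by simpa using h2, by
    intro h
    rw [mem_singleton_iff.1 h, norm_zero] at h1
    linarith⟩ hz1
  have h4 : ‖z‖ < r := by simpa using hz.1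
  rw [h3] at h4
  linarith

open MeasureTheory in
lemma kineq (m : ℂ → ℂ) (hm : DifferentiableOn ℂ m (ball 0 1))
    (hinj : InjOn (kphi m) (ball 0 1 \ {0})) (r R ρ : ℝ) (hr : 0 < r) (hrR : r < R) (hR : R < 1)
    (hρ : 0 ≤ ρ) (hbr : ‖m 0‖ * r ^ 2 < 1)
    (hb : ∀ z, ‖z‖ = r →
      ‖kphi m z - m 0 * (r : ℂ) ^ 2 * (starRingEnd ℂ) (kphi m z)‖ ≤ ρ) :
    (1 - ‖m 0‖ ^ 2 * r ^ 4) * (1 / r ^ 2 - 1 / R ^ 2 + ‖m 0‖ ^ 2 * (R ^ 2 - r ^ 2)) ≤ ρ ^ 2 := by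
  set c : ℂ := m 0 * (r : ℂ) ^ 2 with hc
  have hcn : ‖c‖ = ‖m 0‖ * r ^ 2 := by simp [hc]
  let T : ℂ →L[ℝ] ℂ := ContinuousLinearMap.id ℝ ℂ -
    (ContinuousLinearMap.mul ℝ ℂ c).comp (Complex.conjCLE : ℂ →L[ℝ] ℂ)
  have hT : ∀ w, T w = w - c * (starRingEnd ℂ) w := fun w => by simp [T]
  have hTinj : Function.Injective T := by
    rw [injective_iff_map_eq_zero]
    intro w hw
    rw [hT, sub_eq_zero] at hw
    have h2 : ‖w‖ = ‖c‖ * ‖w‖ := by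
      conv_lhs => rw [hw]
      simp
    rw [hcn] at h2
    have : ‖w‖ = 0 := by nlinarith [norm_nonneg w]
    exact norm_eq_zero.1 this
  let A : Set ℂ := {z : ℂ | r < ‖z‖ ∧ ‖z‖ < R}
  have hA : MeasurableSet A :=
    ((isOpen_lt continuous_const continuous_norm).inter
      (isOpen_lt continuous_norm continuous_const)).measurableSet
  have hAsub : A ⊆ ball 0 1 \ {0} := by
    rintro z ⟨h1, h2⟩
    exact ⟨by simpa using h2.trans hR, norm_pos_iff.1 (hr.trans h1)⟩
  let n : ℂ → ℂ := fun z => m z + z * deriv m z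
  have hn : DifferentiableOn ℂ n (ball 0 1) :=
    hm.add (differentiableOn_id.mul (hm.deriv isOpen_ball))
  have hn0 : n 0 = m 0 := by simp [n]
  have hder : ∀ z ∈ A, HasDerivAt (kphi m) (-(z ^ 2)⁻¹ + n z) z := by
    intro z hz
    have h1 := hasDerivAt_inv (hAsub hz).2
    have h2 := (hasDerivAt_id z).mul
      (hm.differentiableAt (isOpen_ball.mem_nhds (hAsub hz).1)).hasDerivAt
    refine HasDerivAt.congr_deriv (h1.add h2) ?_
    simp [n]
  let f' : ℂ → ℂ →L[ℝ] ℂ := fun z => T.comp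
    ((ContinuousLinearMap.toSpanSingleton ℂ (-(z ^ 2)⁻¹ + n z)).restrictScalars ℝ)
  have hf' : ∀ z ∈ A, HasFDerivWithinAt (fun z => T (kphi m z)) (f' z) A z := by
    intro z hz
    exact (T.hasFDerivAt.comp z ((hder z hz).hasFDerivAt.restrictScalars ℝ)).hasFDerivWithinAt
  have hfinj : InjOn (fun z => T (kphi m z)) A := fun x hx y hy h =>
    hinj (hAsub hx) (hAsub hy) (hTinj h)
  have hdet : ∀ z, (f' z).det = (1 - ‖m 0‖ ^ 2 * r ^ 4) * ‖-(z ^ 2)⁻¹ + n z‖ ^ 2 := by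
    intro z
    rw [kdet (-(z ^ 2)⁻¹ + n z) (-c * (starRingEnd ℂ) (-(z ^ 2)⁻¹ + n z)) (f' z)]
    · rw [norm_mul, norm_neg, hcn, RCLike.norm_conj]; ring
    · intro w
      simp only [f', ContinuousLinearMap.comp_apply, ContinuousLinearMap.coe_restrictScalars',
        ContinuousLinearMap.toSpanSingleton_apply, hT, smul_eq_mul, map_mul]
      ring
  have hpos : 0 ≤ 1 - ‖m 0‖ ^ 2 * r ^ 4 := by
    have : 0 ≤ ‖m 0‖ * r ^ 2 := by positivity
    nlinarith
  have himg : (fun z => T (kphi m z)) '' A ⊆ closedBall 0 ρ := by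
    rintro _ ⟨z, hz, rfl⟩
    rw [mem_closedBall_zero_iff]
    refine kcontain m hm hinj r ρ hr (hrR.trans hR) hρ (fun w => ‖T w‖) (by simp) ?_ ?_ z hz.1
      (hz.2.trans hR)
    · intro t w ht
      have : T (t * w) = t • T w := by
        rw [← T.map_smul]; simp
      rw [this, norm_smul, Real.norm_of_nonneg (by linarith)]
    · intro z hz
      simpa only [hT] using hb z hz
  have key := integral_image_eq_integral_abs_det_fderiv_smul volume hA hf' hfinj (fun _ => (1:ℝ))
  simp only [integral_const, smul_eq_mul, mul_one, hdet] at key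
  have hle : volume.real ((fun z => T (kphi m z)) '' A) ≤ volume.real (closedBall (0:ℂ) ρ) :=
    measureReal_mono himg (isCompact_closedBall _ _).measure_lt_top.ne
  have hvol : volume.real (closedBall (0:ℂ) ρ) = Real.pi * ρ ^ 2 := by
    rw [Measure.real, Complex.volume_closedBall]
    simp [hρ, mul_comm]
  have hlow := klower n hn r R hr hrR hR
  rw [hn0] at hlow
  rw [measureReal_restrict_apply_univ] at key
  have e3 : ∫ z in A, |(1 - ‖m 0‖ ^ 2 * r ^ 4) * ‖-(z ^ 2)⁻¹ + n z‖ ^ 2| =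
      (1 - ‖m 0‖ ^ 2 * r ^ 4) * ∫ z in A, ‖-(z ^ 2)⁻¹ + n z‖ ^ 2 := by
    rw [← integral_const_mul]
    congr 1
    ext z
    rw [abs_of_nonneg (by positivity)]
  rw [e3] at key
  have h5 := mul_le_mul_of_nonneg_left hlow hpos
  have h6 : Real.pi * ((1 - ‖m 0‖ ^ 2 * r ^ 4) *
      (1 / r ^ 2 - 1 / R ^ 2 + ‖m 0‖ ^ 2 * (R ^ 2 - r ^ 2))) ≤ Real.pi * ρ ^ 2 := by
    rw [← hvol]
    refine le_trans (le_trans (le_of_eq (by ring)) h5) ?_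
    exact key.symm.le.trans hle
  exact le_of_mul_le_mul_left h6 Real.pi_pos

open Filter Topology in
lemma karea (m : ℂ → ℂ) (hm : DifferentiableOn ℂ m (ball 0 1))
    (hinj : InjOn (kphi m) (ball 0 1 \ {0})) : ‖m 0‖ ≤ 1 := by
  set β := ‖m 0‖ with hβ
  have hβ0 : 0 ≤ β := norm_nonneg _
  have hO := (hm.differentiableAt (isOpen_ball.mem_nhds (mem_ball_self one_pos))).isBigO_sub
  obtain ⟨C, hC, hO⟩ := hO.exists_pos
  rw [Asymptotics.isBigOWith_iff, Metric.eventually_nhds_iff] at hO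
  obtain ⟨δ, hδ, hO⟩ := hO
  set D := C + β * (β + C) with hD
  have hD0 : 0 ≤ D := by positivity
  have main : ∀ R, 0 < R → R < 1 → β ^ 2 * R ^ 2 - 1 / R ^ 2 ≤ 0 := by
    intro R hR0 hR1
    have hev : ∀ᶠ r in 𝓝[>] (0:ℝ), -(1 / R ^ 2) + β ^ 2 * (R ^ 2 - r ^ 2) - β ^ 2 * r ^ 2
        - β ^ 2 * r ^ 4 * (-(1 / R ^ 2) + β ^ 2 * (R ^ 2 - r ^ 2)) ≤ 2 * D * r + D ^ 2 * r ^ 4 := by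
      have h1 : ∀ᶠ r in 𝓝[>] (0:ℝ), r < δ :=
        (eventually_lt_nhds hδ).filter_mono nhdsWithin_le_nhds
      have h2 : ∀ᶠ r in 𝓝[>] (0:ℝ), r < R :=
        (eventually_lt_nhds hR0).filter_mono nhdsWithin_le_nhds
      have h3 : ∀ᶠ r in 𝓝[>] (0:ℝ), β * r ^ 2 < 1 := by
        have : Tendsto (fun r : ℝ => β * r ^ 2) (𝓝 0) (𝓝 (β * 0 ^ 2)) :=
          Continuous.tendsto (by fun_prop) 0
        exact (this.eventually_lt_const (by simp)).filter_mono nhdsWithin_le_nhds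
      filter_upwards [h1, h2, h3, self_mem_nhdsWithin] with r hr1 hr2 hr3 hr0
      have hr0 : 0 < r := hr0
      have hrne := hr0.ne'
      have := kineq m hm hinj r R (1 / r + D * r ^ 2) hr0 hr2 hR1 (by positivity) hr3 ?_
      · rw [← hβ] at this
        have e1 : (1 / r + D * r ^ 2) ^ 2 = 1 / r ^ 2 + (2 * D * r + D ^ 2 * r ^ 4) := by
          field_simp; ring
        have e2 : (1 - β ^ 2 * r ^ 4) * (1 / r ^ 2 - 1 / R ^ 2 + β ^ 2 * (R ^ 2 - r ^ 2))
          = 1 / r ^ 2 + (-(1 / R ^ 2) + β ^ 2 * (R ^ 2 - r ^ 2) - β ^ 2 * r ^ 2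
            - β ^ 2 * r ^ 4 * (-(1 / R ^ 2) + β ^ 2 * (R ^ 2 - r ^ 2))) := by
          field_simp; ring
        linarith
      · intro z hz
        have hz0 : z ≠ 0 := norm_pos_iff.1 (by rw [hz]; exact hr0)
        have hmz : ‖m z - m 0‖ ≤ C * r := by
          have := hO (y := z) (by simpa [hz] using hr1)
          simpa [hz] using this
        have hmz2 : ‖m z‖ ≤ β + C * r := by
          have := norm_add_le (m 0) (m z - m 0)
          rw [add_sub_cancel] at this
          linarith
        have hzz : (r : ℂ) ^ 2 * (starRingEnd ℂ) (z⁻¹) = z := by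
          rw [map_inv₀]
          have : (starRingEnd ℂ) z ≠ 0 := by simpa using hz0
          field_simp
          rw [mul_comm, Complex.mul_conj, Complex.normSq_eq_norm_sq, hz]; simp
        have e : kphi m z - m 0 * (r : ℂ) ^ 2 * (starRingEnd ℂ) (kphi m z) =
            z⁻¹ + z * (m z - m 0) - m 0 * (r : ℂ) ^ 2 * (starRingEnd ℂ) (z * m z) := by
          simp only [kphi, map_add]
          linear_combination (- m 0) * hzz
        rw [e]
        calc _ ≤ ‖z⁻¹‖ + ‖z * (m z - m 0)‖ + ‖m 0 * (r : ℂ) ^ 2 * (starRingEnd ℂ) (z * m z)‖ :=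
              (norm_sub_le _ _).trans (by gcongr; exact norm_add_le _ _)
          _ = 1 / r + r * ‖m z - m 0‖ + β * r ^ 2 * (r * ‖m z‖) := by
              simp [hz, abs_of_pos hr0, hβ]
          _ ≤ 1 / r + r * (C * r) + β * r ^ 2 * (1 * (β + C * 1)) := by
              have : r ≤ 1 := by linarith
              have h7 : β + C * r ≤ β + C * 1 := by gcongr
              gcongr
              exact hmz2.trans h7
          _ = _ := by rw [hD]; ring
    have t1 : Tendsto (fun r : ℝ => -(1 / R ^ 2) + β ^ 2 * (R ^ 2 - r ^ 2) - β ^ 2 * r ^ 2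
        - β ^ 2 * r ^ 4 * (-(1 / R ^ 2) + β ^ 2 * (R ^ 2 - r ^ 2))) (𝓝[>] 0)
        (𝓝 (-(1 / R ^ 2) + β ^ 2 * (R ^ 2 - 0 ^ 2) - β ^ 2 * 0 ^ 2
        - β ^ 2 * 0 ^ 4 * (-(1 / R ^ 2) + β ^ 2 * (R ^ 2 - 0 ^ 2)))) :=
      (Continuous.tendsto (by fun_prop) 0).mono_left nhdsWithin_le_nhds
    have t2 : Tendsto (fun r : ℝ => 2 * D * r + D ^ 2 * r ^ 4) (𝓝[>] 0)
        (𝓝 (2 * D * 0 + D ^ 2 * 0 ^ 4)) :=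
      (Continuous.tendsto (by fun_prop) 0).mono_left nhdsWithin_le_nhds
    have := le_of_tendsto_of_tendsto t1 t2 hev
    norm_num at this ⊢
    linarith
  have t3 : Tendsto (fun R : ℝ => β ^ 2 * R ^ 2 - 1 / R ^ 2) (𝓝[<] 1)
      (𝓝 (β ^ 2 * 1 ^ 2 - 1 / 1 ^ 2)) := by
    apply Tendsto.mono_left _ nhdsWithin_le_nhds
    apply ContinuousAt.tendsto
    have : (1:ℝ) ^ 2 ≠ 0 := by norm_num
    fun_prop (disch := assumption)
  have h8 : β ^ 2 * 1 ^ 2 - 1 / 1 ^ 2 ≤ 0 := by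
    apply le_of_tendsto t3
    have : ∀ᶠ R in 𝓝[<] (1:ℝ), 0 < R :=
      (eventually_gt_nhds one_pos).filter_mono nhdsWithin_le_nhds
    filter_upwards [this, self_mem_nhdsWithin] with R a1 a2
    exact main R a1 a2
  nlinarith

lemma ksqrt (G : ℂ → ℂ) (hG : DifferentiableOn ℂ G (ball 0 1)) (hG0 : G 0 = 1)
    (hne : ∀ z ∈ ball (0:ℂ) 1, G z ≠ 0) : ∃ L : ℂ → ℂ, DifferentiableOn ℂ L (ball 0 1) ∧
      L 0 = 1 ∧ ∀ z ∈ ball (0:ℂ) 1, L z ^ 2 = G z := by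
  have hd : DifferentiableOn ℂ (fun z => deriv G z / G z) (ball 0 1) :=
    (hG.deriv isOpen_ball).div hG hne
  obtain ⟨l, hl0, hl⟩ := hd.isExactOn_ball.with_val_at 0 0
  have hconst : ∀ z ∈ ball (0:ℂ) 1, G z * Complex.exp (- l z) = 1 := by
    intro z hz
    have hder : ∀ y ∈ ball (0:ℂ) 1, HasDerivAt (fun y => G y * Complex.exp (- l y)) 0 y := by
      intro y hy
      have h1 := (hG.differentiableAt (isOpen_ball.mem_nhds hy)).hasDerivAt
      refine (h1.mul (hl y hy).neg.cexp).congr_deriv ?_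
      have := hne y hy
      field_simp
      simp
    have := (convex_ball (0:ℂ) 1).is_const_of_fderivWithin_eq_zero (𝕜 := ℂ)
      (f := fun y => G y * Complex.exp (- l y))
      (fun y hy => (hder y hy).differentiableAt.differentiableWithinAt) ?_ hz
      (mem_ball_self one_pos)
    · rw [this]; simp [hG0, hl0]
    · intro y hy
      rw [fderivWithin_of_isOpen isOpen_ball hy, (hder y hy).hasFDerivAt.fderiv]
      simp
  refine ⟨fun z => Complex.exp (l z / 2), ?_, by simp [hl0], ?_⟩
  · intro z hz
    exact ((hl z hz).div_const 2).cexp.differentiableAt.differentiableWithinAt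
  · intro z hz
    have := hconst z hz
    rw [Complex.exp_neg] at this
    have h2 := Complex.exp_ne_zero (l z)
    rw [← Complex.exp_nat_mul]
    field_simp at this
    rw [this]
    congr 1
    push_cast; ring

/-- Bieberbach: second coefficient. -/
lemma kbieb (G : ℂ → ℂ) (hG : DifferentiableOn ℂ G (ball 0 1)) (hG0 : G 0 = 1)
    (hinj : InjOn (fun z => z * G z) (ball 0 1)) : ‖deriv G 0‖ ≤ 2 := by
  have h00 : (0:ℂ) ∈ ball (0:ℂ) 1 := mem_ball_self one_pos
  have hne : ∀ z ∈ ball (0:ℂ) 1, G z ≠ 0 := by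
    intro z hz h
    have : z = 0 := hinj hz h00 (by simp [h])
    rw [this, hG0] at h
    exact one_ne_zero h
  obtain ⟨L, hL, hL0, hL2⟩ := ksqrt G hG hG0 hne
  have hLne : ∀ z ∈ ball (0:ℂ) 1, L z ≠ 0 := by
    intro z hz h
    apply hne z hz
    rw [← hL2 z hz, h]; simp
  let E : ℂ → ℂ := fun z => (L z)⁻¹
  have hE : DifferentiableOn ℂ E (ball 0 1) := hL.inv hLne
  let M : ℂ → ℂ := dslope E 0
  have hM : DifferentiableOn ℂ M (ball 0 1) :=
    (Complex.differentiableOn_dslope (isOpen_ball.mem_nhds h00)).2 hE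
  have hEM : ∀ z, E z = 1 + z * M z := by
    intro z
    have := sub_smul_dslope E 0 z
    simp only [sub_zero, smul_eq_mul] at this
    rw [this]; simp [E, hL0]
  have hsq : ∀ z ∈ ball (0:ℂ) 1, z ^ 2 ∈ ball (0:ℂ) 1 := by
    intro z hz
    simp only [mem_ball_zero_iff, norm_pow] at hz ⊢
    exact pow_lt_one₀ (norm_nonneg _) hz two_ne_zero
  let m : ℂ → ℂ := fun z => M (z ^ 2)
  have hmd : DifferentiableOn ℂ m (ball 0 1) :=
    hM.comp (differentiableOn_id.pow 2) hsq
  have hphi : ∀ z, z ≠ 0 → kphi m z = (z * L (z ^ 2))⁻¹ := by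
    intro z hz
    have : (L (z^2))⁻¹ = 1 + z ^ 2 * M (z ^ 2) := hEM (z ^ 2)
    rw [mul_inv, this]
    simp only [kphi, m]
    field_simp
  have hinj2 : InjOn (kphi m) (ball 0 1 \ {0}) := by
    rintro x ⟨hx, hx0⟩ y ⟨hy, hy0⟩ hxy
    have hx0 : x ≠ 0 := hx0
    have hy0 : y ≠ 0 := hy0
    rw [hphi x hx0, hphi y hy0, inv_inj] at hxy
    have h1 : x ^ 2 * G (x ^ 2) = y ^ 2 * G (y ^ 2) := by
      rw [← hL2 _ (hsq x hx), ← hL2 _ (hsq y hy), ← mul_pow, hxy, mul_pow]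
    have h2 : x ^ 2 = y ^ 2 := hinj (hsq x hx) (hsq y hy) h1
    rw [h2] at hxy
    exact mul_right_cancel₀ (hLne _ (hsq y hy)) hxy
  have hfin := karea m hmd hinj2
  have hLd := (hL.differentiableAt (isOpen_ball.mem_nhds h00)).hasDerivAt
  have hm0 : m 0 = - deriv L 0 := by
    have : m 0 = deriv E 0 := by simp [m, M]
    rw [this]
    have h := hLd.inv (by rw [hL0]; exact one_ne_zero)
    have h' : HasDerivAt E _ 0 := h
    rw [h'.deriv, hL0]; simp
  have hGd : deriv G 0 = 2 * deriv L 0 := by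
    have h := hLd.pow 2
    have h' : HasDerivAt G (2 * deriv L 0) 0 := by
      refine HasDerivAt.congr_of_eventuallyEq (f := fun z => L z ^ 2)
        (h.congr_deriv (by simp [hL0])) ?_
      filter_upwards [isOpen_ball.mem_nhds h00] with z hz
      exact (hL2 z hz).symm
    exact h'.deriv
  rw [hm0, norm_neg] at hfin
  rw [hGd, norm_mul]
  simp
  linarith

/-- Koebe one quarter theorem. -/
lemma kkoebe (G : ℂ → ℂ) (hG : DifferentiableOn ℂ G (ball 0 1)) (hG0 : G 0 = 1)
    (hinj : InjOn (fun z => z * G z) (ball 0 1)) (w : ℂ) (hw : ‖w‖ < 1 / 4) :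
    ∃ z ∈ ball (0:ℂ) 1, z * G z = w := by
  have h00 : (0:ℂ) ∈ ball (0:ℂ) 1 := mem_ball_self one_pos
  by_contra! hcon
  have hw0 : w ≠ 0 := by
    rintro rfl
    exact hcon 0 h00 (by simp)
  have hden : ∀ z ∈ ball (0:ℂ) 1, 1 - z * G z / w ≠ 0 := by
    intro z hz h
    apply hcon z hz
    field_simp at h
    rw [mul_zero] at h
    exact (sub_eq_zero.1 h).symm
  have hdd : DifferentiableOn ℂ (fun z => 1 - z * G z / w) (ball 0 1) :=
    (differentiableOn_const 1).sub ((differentiableOn_id.mul hG).div_const w)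
  let K : ℂ → ℂ := fun z => G z / (1 - z * G z / w)
  have hK : DifferentiableOn ℂ K (ball 0 1) := hG.div hdd hden
  have hK0 : K 0 = 1 := by simp [K, hG0]
  have hKinj : InjOn (fun z => z * K z) (ball 0 1) := by
    intro x hx y hy h
    apply hinj hx hy
    have hx' := hden x hx
    have hy' := hden y hy
    simp only [K, ← mul_div_assoc] at h ⊢
    rw [div_eq_div_iff hx' hy'] at h
    linear_combination h
  have b1 := kbieb G hG hG0 hinj
  have b2 := kbieb K hK hK0 hKinj
  have hd : deriv K 0 = deriv G 0 + 1 / w := by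
    have hGd := (hG.differentiableAt (isOpen_ball.mem_nhds h00)).hasDerivAt
    have h := hGd.div (((((hasDerivAt_id (0:ℂ)).mul hGd).div_const w).const_sub 1)) (by simp)
    have h' : HasDerivAt K _ 0 := h
    rw [h'.deriv]
    simp [hG0]
  have : ‖1 / w‖ ≤ 4 := by
    have e : 1 / w = deriv K 0 - deriv G 0 := by rw [hd]; ring
    rw [e]
    exact (norm_sub_le _ _).trans (by linarith)
  rw [norm_div, norm_one, div_le_iff₀ (norm_pos_iff.2 hw0)] at this
  linarith

/-- **Koebe-type estimate for the distance to the boundary.** Let `F(x) = f(x)·x` be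
biholomorphic on the unit ball `𝔹` of a complex Banach space, with `f` holomorphic. Then
`(1/4)·‖DF(0)‖ ≤ dist(F(0), ∂F(𝔹))`. -/
theorem stmt14 {X : Type*} [NormedAddCommGroup X] [NormedSpace ℂ X] [CompleteSpace X]
    (f : X → ℂ) (hf : DifferentiableOn ℂ f (ball (0 : X) 1))
    (F : X → X) (hF : ∀ x ∈ ball (0 : X) 1, F x = f x • x)
    (hbi : IsBiholoOn F (ball (0 : X) 1)) :
    (1 / 4) * ‖fderiv ℂ F 0‖ ≤ infDist (F 0) (frontier (F '' ball (0 : X) 1)) := by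
  obtain ⟨hFd, hFinj, g, hg, hgF⟩ := hbi
  have h00 : (0:X) ∈ ball (0:X) 1 := mem_ball_self one_pos
  have hF0 : F 0 = 0 := by rw [hF 0 h00, smul_zero]
  have hfd : fderiv ℂ F 0 = f 0 • ContinuousLinearMap.id ℂ X := by
    have h1 := (hf.differentiableAt (isOpen_ball.mem_nhds h00)).hasFDerivAt
    have h2 := h1.smul (hasFDerivAt_id (𝕜 := ℂ) (0:X))
    have h3 : HasFDerivAt F (f 0 • ContinuousLinearMap.id ℂ X) 0 := by
      refine HasFDerivAt.congr_of_eventuallyEq (f := fun x => f x • x)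
        (h2.congr_fderiv (by ext; simp)) ?_
      filter_upwards [isOpen_ball.mem_nhds h00] with x hx
      exact hF x hx
    exact h3.fderiv
  have hnorm : ‖fderiv ℂ F 0‖ ≤ ‖f 0‖ := by
    rw [hfd, norm_smul]
    exact mul_le_of_le_one_right (norm_nonneg _) ContinuousLinearMap.norm_id_le
  rcases subsingleton_or_nontrivial X with hX | hX
  · have : fderiv ℂ F 0 = 0 := by ext x; exact Subsingleton.elim _ _
    rw [this]; simp
  rcases eq_or_ne (f 0) 0 with hf0 | hf0
  · have : fderiv ℂ F 0 = 0 := by rw [hfd, hf0, zero_smul]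
    rw [this]; simp [infDist_nonneg]
  -- the image is not everything
  have hnu : F '' ball (0:X) 1 ≠ univ := by
    intro hu
    rw [hu] at hg
    have hbd : Bornology.IsBounded (range g) := by
      apply isBounded_ball.subset (t := ball (0:X) 1)
      rintro _ ⟨y, rfl⟩
      have hy : y ∈ F '' ball (0:X) 1 := by rw [hu]; trivial
      obtain ⟨x, hx, rfl⟩ := hy
      rwa [hgF x hx]
    have hconst := (differentiableOn_univ.1 hg).apply_eq_apply_of_bounded hbd
    obtain ⟨x, hx⟩ := exists_ne (0:X)
    obtain ⟨y, hy, hy2⟩ : ∃ y ∈ ball (0:X) 1, y ≠ 0 := by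
      obtain ⟨y, hy⟩ := NormedField.exists_norm_lt ℂ
        (show 0 < 1 / ‖x‖ from one_div_pos.2 (norm_pos_iff.2 hx))
      refine ⟨y • x, ?_, smul_ne_zero (norm_pos_iff.1 hy.1) hx⟩
      rw [mem_ball_zero_iff, norm_smul]
      exact (lt_div_iff₀ (norm_pos_iff.2 hx)).1 hy.2
    apply hy2
    rw [← hgF y hy, ← hgF 0 h00]
    exact hconst _ _
  have hfr : (frontier (F '' ball (0:X) 1)).Nonempty :=
    nonempty_frontier_iff.2 ⟨⟨F 0, 0, h00, rfl⟩, hnu⟩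
  have hsub : ball (0:X) (‖f 0‖ / 4) ⊆ F '' ball (0:X) 1 := by
    intro w hw
    rcases eq_or_ne w 0 with rfl | hw0
    · exact ⟨0, h00, hF0⟩
    have hwn : 0 < ‖w‖ := norm_pos_iff.2 hw0
    let u : X := (‖w‖ : ℂ)⁻¹ • w
    have hun : ‖u‖ = 1 := by
      simp [u, norm_smul, hwn.ne']
    have hu0 : u ≠ 0 := norm_pos_iff.1 (by rw [hun]; exact one_pos)
    have hmem : ∀ z ∈ ball (0:ℂ) 1, z • u ∈ ball (0:X) 1 := by
      intro z hz
      simpa [norm_smul, hun] using hz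
    let G : ℂ → ℂ := fun z => f (z • u) / f 0
    have hG : DifferentiableOn ℂ G (ball 0 1) := by
      apply DifferentiableOn.div_const
      exact hf.comp (differentiableOn_id.smul_const u) hmem
    have hFz : ∀ z ∈ ball (0:ℂ) 1, F (z • u) = (f 0 * (z * G z)) • u := by
      intro z hz
      rw [hF _ (hmem z hz), smul_smul]
      congr 1
      simp only [G]
      field_simp
    have hGinj : InjOn (fun z => z * G z) (ball 0 1) := by
      intro x hx y hy h
      have h1 : F (x • u) = F (y • u) := by
        rw [hFz x hx, hFz y hy]
        simp only at h
        rw [h]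
      exact smul_left_injective ℂ hu0 (hFinj (hmem x hx) (hmem y hy) h1)
    have hwlt : ‖((‖w‖ : ℂ) / f 0)‖ < 1 / 4 := by
      rw [norm_div, Complex.norm_real, norm_norm, div_lt_iff₀ (norm_pos_iff.2 hf0)]
      rw [mem_ball_zero_iff] at hw
      linarith
    obtain ⟨z, hz, hzw⟩ := kkoebe G hG (by simp [G, hf0]) hGinj _ hwlt
    refine ⟨z • u, hmem z hz, ?_⟩
    rw [hFz z hz, hzw, mul_div_cancel₀ _ hf0, smul_smul, mul_inv_cancel₀, one_smul]
    exact_mod_cast hwn.ne'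
  rw [hF0, le_infDist hfr]
  intro y hy
  have hnot : y ∉ ball (0:X) (‖f 0‖ / 4) := fun h =>
    hy.2 (interior_maximal hsub isOpen_ball h)
  rw [mem_ball_zero_iff, not_lt] at hnot
  rw [dist_zero_left]
  linarith
end
end

section
/- Let f : 𝔹 → ℂ be holomorphic with f(0) = 1, let F(x) = f(x)·x, and assume ‖F‖_B = 1, where ‖F‖_B = ‖F(0)‖ + sup_{x ∈ 𝔹, x ≠ 0} (1−‖x‖²)·‖DF(x)x‖/‖x‖. Then for every x ∈ 𝔹 with 0 < ‖x‖ ≤ 1/√3 and every l_x ∈ T(x), Re l_x(DF(x)x) ≥ ‖x‖·(1 − √3·‖x‖)/(1 − ‖x‖/√3)³. -/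
open Metric Set

noncomputable section

/-- The Bloch (semi-)norm `‖F‖_B = ‖F(0)‖ + sup_{x ∈ 𝔹, x ≠ 0} (1−‖x‖²)‖DF(x)x‖/‖x‖`
of a holomorphic mapping on the unit ball. -/
def blochNorm {X : Type*} [NormedAddCommGroup X] [NormedSpace ℂ X] (F : X → X) : ℝ :=
  ‖F 0‖ + ⨆ x : {x : X // x ∈ ball (0 : X) 1 ∧ x ≠ 0},
    (1 - ‖x.1‖ ^ 2) * ‖fderiv ℂ F x.1 x.1‖ / ‖x.1‖


lemma moebius_id (w b : ℂ) :
    ‖1 - (starRingEnd ℂ) b * w‖ ^ 2 - ‖w - b‖ ^ 2 = (1 - ‖w‖ ^ 2) * (1 - ‖b‖ ^ 2) := by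
  simp only [← Complex.normSq_eq_norm_sq, Complex.normSq_apply]
  simp
  ring

lemma den_ne (w b : ℂ) (hb : ‖b‖ < 1) (hw : ‖w‖ < 1) : 1 - (starRingEnd ℂ) b * w ≠ 0 := by
  intro h
  have h1 : (starRingEnd ℂ) b * w = 1 := (sub_eq_zero.mp h).symm
  have h2 : ‖b‖ * ‖w‖ = 1 := by
    have := congrArg norm h1
    simpa using this
  nlinarith [norm_nonneg b, norm_nonneg w]

lemma moebius_lt (w b : ℂ) (hb : ‖b‖ < 1) (hw : ‖w‖ < 1) :
    ‖(w - b) / (1 - (starRingEnd ℂ) b * w)‖ < 1 := by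
  have h0 : 0 < ‖1 - (starRingEnd ℂ) b * w‖ := norm_pos_iff.mpr (den_ne w b hb hw)
  rw [norm_div, div_lt_one h0]
  have h1 := moebius_id w b
  have h2 : 0 < (1 - ‖w‖ ^ 2) * (1 - ‖b‖ ^ 2) := by
    apply mul_pos <;> nlinarith [norm_nonneg b, norm_nonneg w]
  exact lt_of_pow_lt_pow_left₀ 2 h0.le (by linarith)

lemma schwarz_pick (p : ℂ → ℂ) (hp : DifferentiableOn ℂ p (ball 0 1))
    (hm : ∀ z ∈ ball (0 : ℂ) 1, ‖p z‖ < 1) (a s : ℝ) (ha : |a| < 1) (hs : |s| < 1) :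
    ‖1 - (starRingEnd ℂ) (p a) * p s‖ ^ 2 * ((1 - s ^ 2) * (1 - a ^ 2)) ≤
      (1 - a * s) ^ 2 * ((1 - ‖p s‖ ^ 2) * (1 - ‖p a‖ ^ 2)) := by
  have hac : ‖(a : ℂ)‖ < 1 := by simpa using ha
  have hac' : ‖(-a : ℂ)‖ < 1 := by simpa using ha
  have hsc : ‖(s : ℂ)‖ < 1 := by simpa using hs
  have hpa : ‖p a‖ < 1 := hm _ (by simpa using ha)
  have hps : ‖p s‖ < 1 := hm _ (by simpa using hs)
  let m : ℂ → ℂ := fun u => (u - (-a : ℂ)) / (1 - (starRingEnd ℂ) (-a : ℂ) * u)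
  have hmm : ∀ u ∈ ball (0 : ℂ) 1, m u ∈ ball (0 : ℂ) 1 := by
    intro u hu
    have hu' : ‖u‖ < 1 := by simpa using hu
    have := moebius_lt u (-a) hac' hu'
    simpa [m] using this
  have hmd : DifferentiableOn ℂ m (ball 0 1) := by
    apply DifferentiableOn.div (by fun_prop) (by fun_prop)
    intro u hu
    exact den_ne u (-a) hac' (by simpa using hu)
  let G : ℂ → ℂ := fun u => (p (m u) - p a) / (1 - (starRingEnd ℂ) (p a) * p (m u))
  have hpm : DifferentiableOn ℂ (fun u => p (m u)) (ball 0 1) := hp.comp hmd hmm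
  have hGd : DifferentiableOn ℂ G (ball 0 1) := by
    apply DifferentiableOn.div
    · exact hpm.sub_const _
    · exact (hpm.const_mul _).const_sub _
    · intro u hu
      exact den_ne _ _ hpa (hm _ (hmm u hu))
  have hG0 : G 0 = 0 := by simp [G, m]
  have hGm : MapsTo G (ball 0 1) (closedBall 0 1) := by
    intro u hu
    have := moebius_lt _ _ hpa (hm _ (hmm u hu))
    simpa [G] using this.le
  set u : ℂ := (s - a) / (1 - (starRingEnd ℂ) (a : ℂ) * s) with hu
  have hu1 : ‖u‖ < 1 := moebius_lt _ _ hac hsc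
  have key := Complex.norm_le_norm_of_mapsTo_ball hGd hGm hG0 hu1
  have hd1 := den_ne s a hac hsc
  have hmu : m u = s := by
    have hd2 := den_ne u (-a) hac' hu1
    simp only [m]
    have hux : u * (1 - (starRingEnd ℂ) (a : ℂ) * s) = s - a := div_mul_cancel₀ _ hd1
    rw [div_eq_iff hd2]
    simp only [map_neg, Complex.conj_ofReal] at hux ⊢
    linear_combination hux
  simp only [G, hmu] at key
  rw [hu, norm_div, norm_div] at key
  have e1 : ‖1 - (starRingEnd ℂ) (a : ℂ) * s‖ = |1 - a * s| := by
    rw [Complex.conj_ofReal, ← Real.norm_eq_abs, ← Complex.norm_real]; push_cast; rfl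
  have e2 : ‖(s : ℂ) - a‖ = |s - a| := by
    rw [← Real.norm_eq_abs, ← Complex.norm_real]; push_cast; rfl
  have h1 : 0 < ‖1 - (starRingEnd ℂ) (p a) * p s‖ := norm_pos_iff.mpr (den_ne _ _ hpa hps)
  have h2 : 0 < |1 - a * s| := by rw [← e1]; exact norm_pos_iff.mpr hd1
  rw [e1, e2, div_le_div_iff₀ h1 h2] at key
  have k2 := pow_le_pow_left₀ (by positivity) key 2
  rw [mul_pow, mul_pow, sq_abs, sq_abs] at k2
  have e3 := moebius_id (p s) (p a)
  have e4 : ‖p s - p a‖ ^ 2 =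
    ‖1 - (starRingEnd ℂ) (p a) * p s‖ ^ 2 - (1 - ‖p s‖ ^ 2) * (1 - ‖p a‖ ^ 2) := by linarith
  rw [e4] at k2
  nlinarith

open Filter Topology in
/-- Julia's lemma on the unit disk at `-1`, along the real axis. -/
lemma julia (p : ℂ → ℂ) (hp : DifferentiableOn ℂ p (ball 0 1))
    (hm : ∀ z ∈ ball (0 : ℂ) 1, ‖p z‖ < 1) (hd : DifferentiableAt ℂ p (-1)) (h1 : p (-1) = 1)
    (al : ℝ) (hal : (deriv p (-1)).re = -al) (s : ℝ) (hs : |s| < 1) :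
    ‖1 - p s‖ ^ 2 * (1 - s ^ 2) ≤ (1 + s) ^ 2 * ((1 - ‖p s‖ ^ 2) * al) := by
  -- the path
  let q : ℝ → ℂ := fun t => p ((t : ℂ) - 1)
  have hq : HasDerivAt q (deriv p (-1)) 0 := by
    have h2 : HasDerivAt (fun t : ℝ => ((t : ℂ) - 1)) 1 0 :=
      (Complex.ofRealCLM.hasDerivAt (x := 0)).sub_const 1
    have h3 : HasDerivAt p (deriv p (-1)) ((fun t : ℝ => ((t : ℂ) - 1)) 0) := by
      simpa using hd.hasDerivAt
    have h4 := h3.comp (0 : ℝ) h2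
    rw [mul_one] at h4
    exact h4
  have hq0 : q 0 = 1 := by simp [q, h1]
  have hN : HasDerivAt (fun t => ‖q t‖ ^ 2) (-2 * al) 0 := by
    have := hq.norm_sq
    rw [hq0] at this
    convert this using 1
    simp [Complex.inner, hal]
  have hslope : Tendsto (fun t => t⁻¹ * (1 - ‖q t‖ ^ 2)) (𝓝[>] 0) (𝓝 (2 * al)) := by
    have h4 := hN.tendsto_slope_zero_right
    have h5 := h4.neg
    simp only [zero_add, hq0, norm_one, smul_eq_mul] at h5
    convert h5 using 2 <;> ring
  have hqc : Tendsto q (𝓝[>] 0) (𝓝 1) := by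
    have := hq.continuousAt.tendsto
    rw [hq0] at this
    exact this.mono_left nhdsWithin_le_nhds
  have hL : Tendsto (fun t : ℝ => ‖1 - (starRingEnd ℂ) (q t) * p s‖ ^ 2 * ((1 - s ^ 2) * (2 - t)))
      (𝓝[>] 0) (𝓝 (‖1 - (starRingEnd ℂ) 1 * p s‖ ^ 2 * ((1 - s ^ 2) * (2 - 0)))) := by
    have ht : Tendsto (fun t : ℝ => t) (𝓝[>] 0) (𝓝 0) := tendsto_id.mono_left nhdsWithin_le_nhds
    have hc := (Complex.continuous_conj.tendsto 1).comp hqc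
    exact ((((hc.mul_const _).const_sub 1).norm).pow 2).mul ((ht.const_sub 2).const_mul _)
  have hR : Tendsto (fun t : ℝ => (1 - (t - 1) * s) ^ 2 *
      ((1 - ‖p s‖ ^ 2) * (t⁻¹ * (1 - ‖q t‖ ^ 2))))
      (𝓝[>] 0) (𝓝 ((1 - (0 - 1) * s) ^ 2 * ((1 - ‖p s‖ ^ 2) * (2 * al)))) := by
    have ht : Tendsto (fun t : ℝ => t) (𝓝[>] 0) (𝓝 0) := tendsto_id.mono_left nhdsWithin_le_nhds
    exact ((((ht.sub_const 1).mul_const s).const_sub 1).pow 2).mul (hslope.const_mul _)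
  have hev : ∀ᶠ t : ℝ in 𝓝[>] 0,
      ‖1 - (starRingEnd ℂ) (q t) * p s‖ ^ 2 * ((1 - s ^ 2) * (2 - t)) ≤
      (1 - (t - 1) * s) ^ 2 * ((1 - ‖p s‖ ^ 2) * (t⁻¹ * (1 - ‖q t‖ ^ 2))) := by
    filter_upwards [Ioo_mem_nhdsGT (show (0 : ℝ) < 1 by norm_num)] with t ht
    have h6 := schwarz_pick p hp hm (t - 1) s (by rw [abs_lt]; constructor <;> linarith [ht.1, ht.2]) hs
    have h7 : p ((t - 1 : ℝ) : ℂ) = q t := by simp [q]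
    rw [h7] at h6
    have h8 := mul_le_mul_of_nonneg_left h6 (inv_nonneg.mpr ht.1.le)
    have ht0 : t ≠ 0 := ht.1.ne'
    calc _ = t⁻¹ * (‖1 - (starRingEnd ℂ) (q t) * p s‖ ^ 2 * ((1 - s ^ 2) * (1 - (t - 1) ^ 2))) := by
          field_simp
          ring
      _ ≤ _ := h8
      _ = _ := by ring
  have := le_of_tendsto_of_tendsto hL hR hev
  simp only [map_one, one_mul] at this
  nlinarith

lemma horo (R N s : ℝ) (h1 : -1 < s) (h2 : s < 1) (h10 : R ^ 2 ≤ N) (h11 : R < 1)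
    (hJ : (1 - 2 * R + N) * (1 - s) ≤ (1 + s) * ((1 - N) * (1 / 2))) :
    1 - 3 * s ≤ R * (3 - s) := by
  have h12 : (1 - R) * ((1 - R) * (1 - s) * 2 - (1 + s) * (1 + R)) ≤ 0 := by
    have : 0 ≤ (N - R ^ 2) * (3 - s) := mul_nonneg (by linarith) (by linarith)
    linarith
  have h13 : (1 - R) * (1 - s) * 2 - (1 + s) * (1 + R) ≤ 0 :=
    nonpos_of_mul_nonpos_right h12 (by linarith)
  linarith

open Filter Topology in
/-- One-variable Bonk distortion theorem. -/
lemma bonk (h : ℂ → ℂ) (hh : DifferentiableOn ℂ h (ball 0 1)) (h0 : h 0 = 1)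
    (hb : ∀ z ∈ ball (0 : ℂ) 1, (1 - ‖z‖ ^ 2) * ‖h z‖ ≤ 1) (r : ℝ) (hr : 0 < r)
    (hr1 : r ≤ 1 / Real.sqrt 3) :
    (1 - Real.sqrt 3 * r) / (1 - r / Real.sqrt 3) ^ 3 ≤ (h r).re := by
  set k := Real.sqrt 3 with hk
  have hk2 : k ^ 2 = 3 := Real.sq_sqrt (by norm_num)
  have hk0 : 0 < k := Real.sqrt_pos.mpr (by norm_num)
  have hk17 : 1.7 < k := by nlinarith
  have hk18 : k < 1.8 := by nlinarith
  have hrk : r * k ≤ 1 := by rwa [le_div_iff₀ hk0] at hr1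
  have hkc : (k : ℂ) ^ 2 = 3 := by exact_mod_cast congrArg (fun x : ℝ => (x : ℂ)) hk2
  have hkc0 : (k : ℂ) ≠ 0 := by exact_mod_cast hk0.ne'
  have hd0 : DifferentiableAt ℂ h 0 := hh.differentiableAt (ball_mem_nhds 0 one_pos)
  -- the derivative at zero has vanishing real part
  have hre : (deriv h 0).re = 0 := by
    have hq : HasDerivAt (fun t : ℝ => h (t : ℂ)) (deriv h 0) 0 := by
      have h3 : HasDerivAt h (deriv h 0) (((0 : ℝ) : ℂ)) := by simpa using hd0.hasDerivAt
      exact h3.comp_ofReal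
    have hqr : HasDerivAt (fun t : ℝ => (h (t : ℂ)).re) (deriv h 0).re 0 := by
      have := Complex.reCLM.hasFDerivAt.comp_hasDerivAt (0 : ℝ) hq
      exact this
    have h4 : HasDerivAt (fun t : ℝ => (1 - t ^ 2)) 0 0 := by
      have := ((hasDerivAt_id (0 : ℝ)).pow 2).const_sub 1
      simpa using this
    have h5 := h4.mul hqr
    have hmax : IsLocalMax ((fun t : ℝ => (1 - t ^ 2)) * (fun t : ℝ => (h (t : ℂ)).re)) 0 := by
      filter_upwards [ball_mem_nhds (0 : ℝ) one_pos] with t ht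
      have ht' : |t| < 1 := by simpa using ht
      have := hb t (by simpa using ht')
      simp only [Pi.mul_apply, Complex.ofReal_zero, h0, Complex.one_re]
      have h6 : ‖(t : ℂ)‖ ^ 2 = t ^ 2 := by simp
      rw [h6] at this
      have h7 : 0 ≤ 1 - t ^ 2 := by
        have := (sq_lt_one_iff_abs_lt_one t).mpr ht'
        linarith
      have h8 := mul_le_mul_of_nonneg_left (Complex.re_le_norm (h t)) h7
      norm_num
      linarith
    have := hmax.hasDerivAt_eq_zero h5
    simpa using this
  let A : ℂ → ℂ := fun w => (k / 4 : ℂ) * (1 + w)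
  let p : ℂ → ℂ := fun w => h (A w) * (1 - A w / k) ^ 2
  have hnorm : ∀ w ∈ ball (0 : ℂ) 1, ‖1 - A w / k‖ ^ 2 < 1 - ‖A w‖ ^ 2 := by
    intro w hw
    have hw' : ‖w‖ < 1 := by simpa using hw
    have hw2 : ‖w‖ ^ 2 < 1 := by nlinarith [norm_nonneg w]
    have e : A w / k = (1 + w) / 4 := by simp only [A]; field_simp
    have e2 : ‖A w‖ ^ 2 = 3 / 16 * ‖1 + w‖ ^ 2 := by
      simp only [A]
      rw [norm_mul, mul_pow, norm_div, Complex.norm_real, Real.norm_of_nonneg hk0.le, div_pow, hk2]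
      norm_num
    rw [e, e2]
    simp only [← Complex.normSq_eq_norm_sq, Complex.normSq_apply] at hw2 ⊢
    simp [Complex.add_re] 
    ring_nf at hw2 ⊢
    linarith
  have hAm : ∀ w ∈ ball (0 : ℂ) 1, A w ∈ ball (0 : ℂ) 1 := by
    intro w hw
    have := hnorm w hw
    have h2 : ‖A w‖ ^ 2 < 1 := by nlinarith [sq_nonneg ‖1 - A w / k‖]
    have : ‖A w‖ < 1 := by nlinarith [norm_nonneg (A w)]
    simpa using this
  have hAd : Differentiable ℂ A := by fun_prop
  have hpd : DifferentiableOn ℂ p (ball 0 1) := by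
    apply DifferentiableOn.mul
    · exact hh.comp hAd.differentiableOn hAm
    · have : Differentiable ℂ (fun w => (1 - A w / k) ^ 2) := by fun_prop
      exact this.differentiableOn
  have hpm : ∀ w ∈ ball (0 : ℂ) 1, ‖p w‖ < 1 := by
    intro w hw
    simp only [p]
    rw [norm_mul, norm_pow]
    have h1 := hnorm w hw
    have h2 := hb _ (hAm w hw)
    rcases (norm_nonneg (h (A w))).eq_or_lt with h3 | h3
    · rw [← h3]; norm_num
    · nlinarith
  have hA1 : A (-1) = 0 := by simp [A]
  have hp1 : p (-1) = 1 := by simp [p, hA1, h0]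
  have hpD : HasDerivAt p (deriv h 0 * (k / 4) - 1 / 2) (-1) := by
    have a1 : HasDerivAt A (k / 4 : ℂ) (-1) := by
      simpa using ((hasDerivAt_id (-1 : ℂ)).const_add 1).const_mul (k / 4 : ℂ)
    have a2 : HasDerivAt h (deriv h 0) (A (-1)) := by rw [hA1]; exact hd0.hasDerivAt
    have a3 := a2.comp (-1) a1
    have a4 := ((a1.div_const (k : ℂ)).const_sub 1).pow 2
    have a5 := a3.mul a4
    refine HasDerivAt.congr_deriv (f := p) a5 ?_
    simp [hA1, h0]
    field_simp
    norm_num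
    try ring
  have hre2 : (deriv p (-1)).re = -(1 / 2) := by
    rw [hpD.deriv]
    have : (deriv h 0 * (k / 4 : ℂ)).re = 0 := by
      have e : (k / 4 : ℂ) = ((k / 4 : ℝ) : ℂ) := by push_cast; rfl
      rw [e, Complex.re_mul_ofReal, hre, zero_mul]
    rw [Complex.sub_re, this]
    norm_num
  set s : ℝ := 4 * r / k - 1 with hs
  have hsk : k * (1 + s) = 4 * r := by rw [hs]; field_simp; ring
  have hs1 : |s| < 1 := by
    rw [abs_lt]; constructor
    · rw [hs]; have : 0 < 4 * r / k := by positivity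
      linarith
    · by_contra hcon
      push Not at hcon
      nlinarith
  have hJ := julia p hpd hpm hpD.differentiableAt hp1 (1 / 2) hre2 s hs1
  have hAs : A s = r := by
    simp only [A]
    have : (k : ℂ) * (1 + s) = 4 * r := by exact_mod_cast congrArg (fun x : ℝ => (x : ℂ)) hsk
    linear_combination (1 / 4) * this
  have hps : (p s).re = (h r).re * (1 - r / k) ^ 2 := by
    simp only [p, hAs]
    have e : (1 - (r : ℂ) / k) ^ 2 = (((1 - r / k) ^ 2 : ℝ) : ℂ) := by push_cast; rfl
    rw [e, Complex.re_mul_ofReal]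
  have hq : 0 < 1 - r / k := by
    rw [sub_pos, div_lt_one hk0]; nlinarith
  -- conclude
  have hsl := abs_lt.mp hs1
  have hJ2 : ‖1 - p s‖ ^ 2 * (1 - s) ≤ (1 + s) * ((1 - ‖p s‖ ^ 2) * (1 / 2)) := by
    have : 0 < 1 + s := by linarith
    refine le_of_mul_le_mul_left ?_ this
    linarith
  have hre3 : (1 - 3 * s) / (3 - s) ≤ (p s).re := by
    rw [div_le_iff₀ (by linarith)]
    have h9 : ‖1 - p s‖ ^ 2 = 1 - 2 * (p s).re + ‖p s‖ ^ 2 := by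
      simp only [← Complex.normSq_eq_norm_sq, Complex.normSq_apply]
      simp
      ring
    have h10 : (p s).re ^ 2 ≤ ‖p s‖ ^ 2 := by
      rw [← Complex.normSq_eq_norm_sq, Complex.normSq_apply]; nlinarith [sq_nonneg (p s).im]
    have h11 : (p s).re < 1 := lt_of_le_of_lt (Complex.re_le_norm _) (hpm _ (by simpa using hs1))
    rw [h9] at hJ2
    exact horo _ _ _ hsl.1 hsl.2 h10 h11 hJ2
  have hfin : (1 - 3 * s) / (3 - s) = (1 - k * r) / (1 - r / k) := by
    rw [div_eq_div_iff (by linarith) hq.ne']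
    have e1 : r / k = (1 + s) / 4 := by rw [hs]; ring
    have e2 : k * r = 3 * (1 + s) / 4 := by
      have : r = k * (1 + s) / 4 := by linarith
      rw [this]; linear_combination (1 + s) / 4 * hk2
    rw [e1, e2]; ring
  rw [hfin, hps] at hre3
  have : (1 - k * r) / (1 - r / k) ^ 3 = (1 - k * r) / (1 - r / k) / (1 - r / k) ^ 2 := by
    rw [div_div]; ring
  rw [this, div_le_iff₀ (by positivity)]
  exact hre3

/-- **Bonk-type distortion theorem.** Let `F(x) = f(x)·x` on the unit ball `𝔹` of a complex
Banach space, with `f` holomorphic, `f(0) = 1` and `‖F‖_B = 1`. Then for every `x` with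
`0 < ‖x‖ ≤ 1/√3` and every `l_x ∈ T(x)`,
`Re l_x(DF(x)x) ≥ ‖x‖(1 − √3‖x‖)/(1 − ‖x‖/√3)³`. -/
theorem stmt15 {X : Type*} [NormedAddCommGroup X] [NormedSpace ℂ X] [CompleteSpace X]
    (f : X → ℂ) (hf : DifferentiableOn ℂ f (ball (0 : X) 1)) (hf0 : f 0 = 1)
    (F : X → X) (hF : ∀ x ∈ ball (0 : X) 1, F x = f x • x)
    (hB : blochNorm F = 1) :
    ∀ x : X, 0 < ‖x‖ → ‖x‖ ≤ 1 / Real.sqrt 3 →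
      ∀ l : X →L[ℂ] ℂ, l x = (‖x‖ : ℂ) → ‖l‖ = 1 →
        ‖x‖ * (1 - Real.sqrt 3 * ‖x‖) / (1 - ‖x‖ / Real.sqrt 3) ^ 3
          ≤ (l (fderiv ℂ F x x)).re := by
  intro x hx hx1 l hlx hl
  have hF0 : F 0 = 0 := by rw [hF 0 (by simp)]; simp
  have hFd : ∀ y ∈ ball (0 : X) 1, HasFDerivAt F (f y • ContinuousLinearMap.id ℂ X +
      (fderiv ℂ f y).smulRight y) y := by
    intro y hy
    have hfy : HasFDerivAt f (fderiv ℂ f y) y :=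
      (hf.differentiableAt (isOpen_ball.mem_nhds hy)).hasFDerivAt
    have := hfy.smul (hasFDerivAt_id y)
    refine this.congr_of_eventuallyEq ?_
    filter_upwards [isOpen_ball.mem_nhds hy] with z hz
    rw [hF z hz]; rfl
  have hFy : ∀ y ∈ ball (0 : X) 1, fderiv ℂ F y y = (f y + fderiv ℂ f y y) • y := by
    intro y hy
    rw [(hFd y hy).fderiv]
    simp [add_smul]
  have hbdd : BddAbove (range fun x : {x : X // x ∈ ball (0 : X) 1 ∧ x ≠ 0} =>
      (1 - ‖x.1‖ ^ 2) * ‖fderiv ℂ F x.1 x.1‖ / ‖x.1‖) := by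
    by_contra hcon
    rw [blochNorm, hF0, iSup, Real.sSup_of_not_bddAbove hcon] at hB
    simp at hB
  have hbound : ∀ y ∈ ball (0 : X) 1, (1 - ‖y‖ ^ 2) * ‖f y + fderiv ℂ f y y‖ ≤ 1 := by
    intro y hy
    by_cases hy0 : y = 0
    · subst hy0; simp [hf0]
    have h1 := le_ciSup hbdd ⟨y, hy, hy0⟩
    rw [blochNorm, hF0, norm_zero, zero_add] at hB
    rw [hB] at h1
    simp only at h1
    rw [hFy y hy, norm_smul] at h1
    have : ‖y‖ ≠ 0 := norm_ne_zero_iff.mpr hy0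
    have e : (1 - ‖y‖ ^ 2) * (‖f y + fderiv ℂ f y y‖ * ‖y‖) / ‖y‖ =
      (1 - ‖y‖ ^ 2) * ‖f y + fderiv ℂ f y y‖ := by field_simp
    rwa [e] at h1
  set r := ‖x‖ with hr
  let u : X := ((r⁻¹ : ℝ) : ℂ) • x
  have hu : ‖u‖ = 1 := by
    simp only [u]
    rw [norm_smul, Complex.norm_real, Real.norm_of_nonneg (by positivity), ← hr]
    field_simp
  have hru : (r : ℂ) • u = x := by
    simp only [u]
    rw [smul_smul, ← Complex.ofReal_mul, mul_inv_cancel₀ hx.ne', Complex.ofReal_one, one_smul]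
  have hzu : ∀ z ∈ ball (0 : ℂ) 1, z • u ∈ ball (0 : X) 1 := by
    intro z hz
    simpa [norm_smul, hu] using hz
  let g : ℂ → ℂ := fun z => f (z • u) * z
  have hg : ∀ z ∈ ball (0 : ℂ) 1,
      HasDerivAt g (f (z • u) + fderiv ℂ f (z • u) (z • u)) z := by
    intro z hz
    have hfy : HasFDerivAt f (fderiv ℂ f (z • u)) (z • u) :=
      (hf.differentiableAt (isOpen_ball.mem_nhds (hzu z hz))).hasFDerivAt
    have h1 : HasDerivAt (fun z : ℂ => z • u) u z := by
      simpa using (hasDerivAt_id z).smul_const u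
    have h2 : HasDerivAt (fun z : ℂ => f (z • u)) (fderiv ℂ f (z • u) u) z :=
      hfy.comp_hasDerivAt z h1
    have h3 := h2.mul (hasDerivAt_id z)
    refine HasDerivAt.congr_deriv (f := g) h3 ?_
    simp
    ring
  have hgd : DifferentiableOn ℂ (deriv g) (ball 0 1) :=
    DifferentiableOn.deriv
      (fun z hz => (hg z hz).differentiableAt.differentiableWithinAt) isOpen_ball
  have hg0 : deriv g 0 = 1 := by
    rw [(hg 0 (by simp)).deriv]; simp [hf0]
  have hgb : ∀ z ∈ ball (0 : ℂ) 1, (1 - ‖z‖ ^ 2) * ‖deriv g z‖ ≤ 1 := by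
    intro z hz
    rw [(hg z hz).deriv]
    have := hbound _ (hzu z hz)
    rwa [norm_smul, hu, mul_one] at this
  have hr1 : r < 1 := by
    refine lt_of_le_of_lt hx1 ?_
    rw [div_lt_one (Real.sqrt_pos.mpr (by norm_num))]
    rw [Real.lt_sqrt] <;> norm_num
  have key := bonk (deriv g) hgd hg0 hgb r hx hx1
  have hrb : (r : ℂ) ∈ ball (0 : ℂ) 1 := by
    simpa [abs_of_pos hx] using hr1
  rw [(hg _ hrb).deriv, hru] at key
  rw [hFy x (by simpa using hr1), map_smul, hlx, smul_eq_mul, Complex.re_mul_ofReal, mul_div_assoc,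
    mul_comm]
  exact mul_le_mul_of_nonneg_right key hx.le
end
end

section
/- Let f : 𝔹 → ℂ be holomorphic with f(0) = 1, F(x) = f(x)·x, and G(x) = DF(x)x for x ∈ 𝔹, where DF(x) is the Fréchet derivative of F at x. Then the following are equivalent: (a) for every x ∈ 𝔹 \ {0} the Fréchet derivative DF(x) is invertible and Re l_x([DF(x)]⁻¹(D²F(x)(x,x) + DF(x)x)) > 0 for every l_x ∈ T(x) (F is quasi-convex of type B on 𝔹); (b) G is starlike on 𝔹. -/
open Metric Set

noncomputable section

/-- `f` is starlike on `s` if `f 0 = 0`, `f` is biholomorphic on `s` and the image `f '' s`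
is starlike with respect to the origin. -/
def IsStarlikeOn {E₁ E₂ : Type*} [NormedAddCommGroup E₁] [NormedSpace ℂ E₁]
    [NormedAddCommGroup E₂] [NormedSpace ℂ E₂] (f : E₁ → E₂) (s : Set E₁) : Prop :=
  IsBiholoOn f s ∧ f 0 = 0 ∧
    ∀ w ∈ f '' s, ∀ t ∈ Set.Icc (0 : ℝ) 1, t • w ∈ f '' s


section Smooth
open Filter Topology
variable {E V : Type*} [NormedAddCommGroup E] [NormedSpace ℂ E] [NormedAddCommGroup V]
  [NormedSpace ℂ V]

lemma hol_cauchy {f : E → V} {c : E} {r M : ℝ} (hr : 0 < r)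
    (hf : DifferentiableOn ℂ f (ball c r)) (hM : ∀ x ∈ ball c r, ‖f x‖ ≤ M) :
    ‖fderiv ℂ f c‖ ≤ 2 * M / r := by
  refine Complex.norm_fderiv_le_div_of_mapsTo_ball hf (fun x hx => ?_) hr
  rw [mem_closedBall, dist_eq_norm]
  have := hM x hx
  have := hM c (mem_ball_self hr)
  have := norm_sub_le (f x) (f c)
  linarith

lemma hol_cauchy' {f : E → V} {x₀ : E} {R r M : ℝ} (hr : 0 < r)
    (hf : DifferentiableOn ℂ f (ball x₀ (R + r))) (hM : ∀ x ∈ ball x₀ (R + r), ‖f x‖ ≤ M) :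
    ∀ x ∈ ball x₀ R, ‖fderiv ℂ f x‖ ≤ 2 * M / r := by
  intro x hx
  have hsub : ball x r ⊆ ball x₀ (R + r) := by
    apply ball_subset_ball'
    have := mem_ball.1 hx
    linarith
  exact hol_cauchy hr (hf.mono hsub) (fun y hy => hM y (hsub hy))

lemma hol_limit [CompleteSpace V] {F : ℕ → E → V} {g : E → V} {x₀ : E} {R r : ℝ} (hr : 0 < r)
    (hF : ∀ n, DifferentiableOn ℂ (F n) (ball x₀ (R + r)))
    {C : ℝ} (hlim : ∀ n, ∀ x ∈ ball x₀ (R + r), ‖F n x - g x‖ ≤ C / ((n : ℝ) + 1)) :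
    DifferentiableOn ℂ g (ball x₀ R) := by
  have hsub : ball x₀ R ⊆ ball x₀ (R + r) := ball_subset_ball (by linarith)
  have hdat : ∀ n, ∀ x ∈ ball x₀ (R + r), DifferentiableAt ℂ (F n) x := fun n x hx =>
    (hF n).differentiableAt (isOpen_ball.mem_nhds hx)
  have h0 : Tendsto (fun n : ℕ => C / ((n : ℝ) + 1)) atTop (𝓝 0) :=
    by simpa [div_eq_mul_inv] using (tendsto_one_div_add_atTop_nhds_zero_nat (𝕜 := ℝ)).const_mul C
  have hU : UniformCauchySeqOn (fun n x => fderiv ℂ (F n) x) atTop (ball x₀ R) := by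
    rw [Metric.uniformCauchySeqOn_iff]
    intro ε hε
    have hδ : 0 < ε * r / 8 := by positivity
    obtain ⟨N, hN⟩ := (eventually_atTop.1 (h0.eventually (gt_mem_nhds hδ)))
    refine ⟨N, fun m hm n hn x hx => ?_⟩
    rw [dist_eq_norm]
    have hd : fderiv ℂ (F m) x - fderiv ℂ (F n) x = fderiv ℂ (fun y => F m y - F n y) x := by
      rw [fderiv_fun_sub (hdat m x (hsub hx)) (hdat n x (hsub hx))]
    rw [hd]
    have := hol_cauchy' (f := fun y => F m y - F n y) (M := ε * r / 4) hr
      ((hF m).sub (hF n)) (fun y hy => by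
        have h1 := hlim m y hy
        have h2 := hlim n y hy
        have h3 := hN m hm
        have h4 := hN n hn
        have : F m y - F n y = (F m y - g y) - (F n y - g y) := by abel
        rw [this]
        have := norm_sub_le (F m y - g y) (F n y - g y)
        linarith) x hx
    have e : 2 * (ε * r / 4) / r = ε / 2 := by field_simp; ring
    rw [e] at this
    linarith
  have hex : ∀ x, ∃ l : E →L[ℂ] V, x ∈ ball x₀ R →
      Tendsto (fun n => fderiv ℂ (F n) x) atTop (𝓝 l) := by
    intro x
    by_cases hx : x ∈ ball x₀ R
    · obtain ⟨l, hl⟩ := cauchySeq_tendsto_of_complete (hU.cauchySeq hx)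
      exact ⟨l, fun _ => hl⟩
    · exact ⟨0, fun h => absurd h hx⟩
  choose g' hg' using hex
  have hT := hU.tendstoUniformlyOn_of_tendsto (f := g') (fun x hx => hg' x hx)
  intro x hx
  refine (hasFDerivAt_of_tendstoUniformlyOn isOpen_ball hT
    (fun n y hy => (hdat n y (hsub hy)).hasFDerivAt) (fun y hy => ?_)
    hx).differentiableAt.differentiableWithinAt
  rw [tendsto_iff_norm_sub_tendsto_zero]
  exact squeeze_zero (fun _ => norm_nonneg _) (fun n => hlim n y (hsub hy)) h0

lemma hol_fderiv_differentiableAt [CompleteSpace V] {f : E → V} {U : Set E} (hU : IsOpen U)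
    (hf : DifferentiableOn ℂ f U) {x₀ : E} (hx₀ : x₀ ∈ U) :
    DifferentiableAt ℂ (fderiv ℂ f) x₀ := by
  -- radii
  obtain ⟨R, hR, M, hsubU, hM⟩ : ∃ R > 0, ∃ M : ℝ, ball x₀ (R+R+R+R+R) ⊆ U ∧
      ∀ x ∈ ball x₀ (R+R+R+R+R), ‖f x‖ ≤ M := by
    have hc : ContinuousAt f x₀ := (hf.differentiableAt (hU.mem_nhds hx₀)).continuousAt
    have h1 : ∀ᶠ x in 𝓝 x₀, ‖f x‖ < ‖f x₀‖ + 1 :=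
      hc.norm.eventually (gt_mem_nhds (by linarith))
    obtain ⟨δ, hδ, h⟩ := Metric.eventually_nhds_iff_ball.1 (h1.and (hU.mem_nhds hx₀))
    refine ⟨δ / 5, by positivity, ‖f x₀‖ + 1, ?_, ?_⟩
    · intro x hx
      exact (h x (by convert hx using 2; ring)).2
    · intro x hx
      exact (h x (by convert hx using 2; ring)).1.le
  have hd5 : DifferentiableOn ℂ f (ball x₀ (R+R+R+R+R)) := hf.mono hsubU
  have hda : ∀ x ∈ ball x₀ (R+R+R+R+R), DifferentiableAt ℂ f x := fun x hx =>
    hd5.differentiableAt (isOpen_ball.mem_nhds hx)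
  obtain ⟨K1, hK1⟩ : ∃ K1, ∀ x ∈ ball x₀ (R+R+R+R), ‖fderiv ℂ f x‖ ≤ K1 :=
    ⟨_, hol_cauchy' hR hd5 hM⟩
  have add_mem : ∀ {S : ℝ} {x h : E}, x ∈ ball x₀ S → ‖h‖ < R → x + h ∈ ball x₀ (S + R) := by
    intro S x h hx hh
    rw [mem_ball, dist_eq_norm] at *
    have := norm_add_le (x - x₀) h
    rw [show x + h - x₀ = x - x₀ + h by abel]
    linarith
  have up : ∀ {S : ℝ} {x : E}, x ∈ ball x₀ S → x ∈ ball x₀ (S + R) := by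
    intro S x hx
    exact ball_subset_ball (by linarith) hx
  -- f(x+h)-f(x)
  have hlip : ∀ h : E, ‖h‖ < R → ∀ x ∈ ball x₀ (R+R+R), ‖f (x + h) - f x‖ ≤ K1 * ‖h‖ := by
    intro h hh x hx
    have := (convex_ball x₀ (R+R+R+R)).norm_image_sub_le_of_norm_fderiv_le (𝕜 := ℂ) (f := f)
      (fun y hy => hda y (up hy)) hK1 (up hx) (add_mem hx hh)
    simpa using this
  have hshift : ∀ h : E, ‖h‖ < R → ∀ x ∈ ball x₀ (R+R+R),
      HasFDerivAt (fun y => f (y + h) - f y) (fderiv ℂ f (x + h) - fderiv ℂ f x) x := by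
    intro h hh x hx
    refine HasFDerivAt.sub ?_ (hda x (up (up hx))).hasFDerivAt
    exact (hasFDerivAt_comp_add_right h).2 (hda (x + h) (up (add_mem hx hh))).hasFDerivAt
  obtain ⟨K2, hK2n, hK2⟩ : ∃ K2, 0 ≤ K2 ∧ ∀ h : E, ‖h‖ < R → ∀ x ∈ ball x₀ (R+R),
      ‖fderiv ℂ f (x + h) - fderiv ℂ f x‖ ≤ K2 * ‖h‖ := by
    have hK1n : 0 ≤ K1 := (norm_nonneg _).trans (hK1 x₀ (mem_ball_self (by linarith)))
    refine ⟨2 * K1 / R, by positivity, fun h hh x hx => ?_⟩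
    have := hol_cauchy' (R := R + R) (f := fun y => f (y + h) - f y) hR
      (fun y hy => (hshift h hh y hy).differentiableAt.differentiableWithinAt)
      (hlip h hh) x hx
    rw [(hshift h hh x (up hx)).fderiv] at this
    refine this.trans_eq (by ring)
  have hsec : ∀ h : E, ‖h‖ < R → ∀ x ∈ ball x₀ (R+R),
      ‖f (x + h) - f x - fderiv ℂ f x h‖ ≤ K2 * ‖h‖ ^ 2 := by
    intro h hh x hx
    have := (convex_closedBall x ‖h‖).norm_image_sub_le_of_norm_fderiv_le' (𝕜 := ℂ) (f := f)
      (φ := fderiv ℂ f x) (C := K2 * ‖h‖) (x := x) (y := x + h)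
      (fun y hy => ?_) (fun y hy => ?_) (by simp) (by simp)
    · simpa [pow_two, mul_assoc] using this
    · rw [mem_closedBall, dist_eq_norm] at hy
      have := up (up (add_mem hx (hy.trans_lt hh)))
      simpa using hda _ this
    · rw [mem_closedBall, dist_eq_norm] at hy
      have := hK2 (y - x) (hy.trans_lt hh) x hx
      rw [add_sub_cancel] at this
      exact this.trans (by gcongr)
  -- x ↦ Df(x) h is differentiable
  have hdir : ∀ h : E, ‖h‖ < R → DifferentiableOn ℂ (fun x => fderiv ℂ f x h) (ball x₀ R) := by
    intro h hh
    have hn : ∀ n : ℕ, ‖((n : ℂ) + 1)⁻¹ • h‖ = ‖h‖ / ((n:ℝ)+1) := by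
      intro n
      rw [norm_smul, norm_inv]
      have : ‖(n : ℂ) + 1‖ = (n : ℝ) + 1 := by
        have := Complex.norm_natCast (n + 1)
        push_cast at this
        exact this
      rw [this]; ring
    have hn' : ∀ n : ℕ, ‖((n : ℂ) + 1)⁻¹ • h‖ < R := by
      intro n
      rw [hn]
      refine lt_of_le_of_lt (div_le_self (norm_nonneg _) ?_) hh
      have : (0:ℝ) ≤ n := n.cast_nonneg
      linarith
    refine hol_limit (F := fun n x => ((n : ℂ) + 1) • (f (x + ((n : ℂ) + 1)⁻¹ • h) - f x))
      (C := K2 * ‖h‖ ^ 2) hR ?_ ?_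
    · intro n x hx
      exact ((hshift _ (hn' n) x (up hx)).differentiableAt.const_smul _).differentiableWithinAt
    · intro n x hx
      have h1 := hsec _ (hn' n) x hx
      have hne : (n : ℂ) + 1 ≠ 0 := Nat.cast_add_one_ne_zero n
      have h2 : ((n : ℂ) + 1) • (f (x + ((n : ℂ) + 1)⁻¹ • h) - f x) - fderiv ℂ f x h
          = ((n : ℂ) + 1) • (f (x + ((n : ℂ) + 1)⁻¹ • h) - f x
            - fderiv ℂ f x (((n : ℂ) + 1)⁻¹ • h)) := by
        rw [map_smul, smul_sub _ _ (_ • _), smul_inv_smul₀ hne]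
      have h3 : ‖(n : ℂ) + 1‖ = (n : ℝ) + 1 := by
        have := Complex.norm_natCast (n + 1)
        push_cast at this
        exact this
      rw [h2, norm_smul, h3]
      rw [hn] at h1
      have hp : (0:ℝ) < (n:ℝ) + 1 := by positivity
      calc ((n:ℝ)+1) * _ ≤ ((n:ℝ)+1) * (K2 * (‖h‖ / ((n:ℝ) + 1)) ^ 2) := by gcongr
        _ = K2 * ‖h‖ ^ 2 / ((n:ℝ)+1) := by field_simp
  have hdir' : ∀ h : E, DifferentiableOn ℂ (fun x => fderiv ℂ f x h) (ball x₀ R) := by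
    intro h
    obtain ⟨c, hc0, hc⟩ : ∃ c : ℂ, c ≠ 0 ∧ ‖c • h‖ < R := by
      have hp : 0 < R / (‖h‖ + 1) := by positivity
      refine ⟨((R / (‖h‖ + 1) : ℝ) : ℂ), by exact_mod_cast hp.ne', ?_⟩
      rw [norm_smul, Complex.norm_real, Real.norm_of_nonneg hp.le]
      have : 0 ≤ ‖h‖ := norm_nonneg h
      rw [div_mul_eq_mul_div, div_lt_iff₀ (by positivity)]
      nlinarith
    have := (hdir _ hc).const_smul c⁻¹
    refine this.congr (fun x _ => ?_)
    simp [smul_smul, inv_mul_cancel₀ hc0]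
  have hdirAt : ∀ h : E, DifferentiableAt ℂ (fun x => fderiv ℂ f x h) x₀ := fun h =>
    (hdir' h).differentiableAt (isOpen_ball.mem_nhds (mem_ball_self hR))
  -- the second derivative
  let B0 : E →ₗ[ℂ] (E →L[ℂ] V) :=
    { toFun := fun h => fderiv ℂ (fun x => fderiv ℂ f x h) x₀
      map_add' := by
        intro a b
        rw [← fderiv_fun_add (hdirAt a) (hdirAt b)]
        simp
      map_smul' := by
        intro c a
        simp only [RingHom.id_apply]
        rw [← fderiv_fun_const_smul (hdirAt a)]
        simp }
  have hB0 : ∀ h, ‖B0 h‖ ≤ (2 * K1 / R) * ‖h‖ := by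
    intro h
    have := hol_cauchy (M := K1 * ‖h‖) hR (hdir' h) (fun x hx =>
      (ContinuousLinearMap.le_opNorm _ _).trans
        (mul_le_mul_of_nonneg_right (hK1 x (up (up (up hx)))) (norm_nonneg _)))
    exact this.trans_eq (by ring)
  let B : E →L[ℂ] (E →L[ℂ] V) := B0.mkContinuous _ hB0
  have hmain : ∀ h : E, ‖h‖ < R →
      ‖fderiv ℂ f (x₀ + h) - fderiv ℂ f x₀ - B h‖ ≤ (2 * K2 / R) * ‖h‖ ^ 2 := by
    intro h hh
    have hx : x₀ ∈ ball x₀ R := mem_ball_self hR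
    have hder : HasFDerivAt (fun y => f (y + h) - f y - fderiv ℂ f y h)
        (fderiv ℂ f (x₀ + h) - fderiv ℂ f x₀ - B h) x₀ :=
      (hshift h hh x₀ (up (up hx))).sub (hdirAt h).hasFDerivAt
    have := hol_cauchy (f := fun y => f (y + h) - f y - fderiv ℂ f y h) (c := x₀)
      (M := K2 * ‖h‖ ^ 2) hR (DifferentiableOn.sub (fun y hy =>
        (hshift h hh y (up (up hy))).differentiableAt.differentiableWithinAt) (hdir' h))
      (fun y hy => hsec h hh y (up hy))
    rw [hder.fderiv] at this
    exact this.trans_eq (by ring)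
  have : HasFDerivAt (fderiv ℂ f) B x₀ := by
    rw [hasFDerivAt_iff_isLittleO_nhds_zero]
    refine (Asymptotics.IsBigO.of_bound (g := fun h : E => ‖h‖ ^ 2) (2 * K2 / R) ?_).trans_isLittleO
      (Asymptotics.isLittleO_norm_pow_id one_lt_two)
    filter_upwards [Metric.ball_mem_nhds (0:E) hR] with h hh
    have := hmain h (by simpa using hh)
    simpa using this
  exact this.differentiableAt

lemma hol_strict [CompleteSpace V] {f : E → V} {U : Set E} (hU : IsOpen U)
    (hf : DifferentiableOn ℂ f U) {x₀ : E} (hx₀ : x₀ ∈ U) :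
    HasStrictFDerivAt f (fderiv ℂ f x₀) x₀ := by
  refine hasStrictFDerivAt_of_hasFDerivAt_of_continuousAt (𝕜 := ℂ) (f' := fderiv ℂ f) ?_
    (hol_fderiv_differentiableAt hU hf hx₀).continuousAt
  filter_upwards [hU.mem_nhds hx₀] with y hy
  exact (hf.differentiableAt (hU.mem_nhds hy)).hasFDerivAt

end Smooth


section Disc
open Filter Topology

/-- positive derivative along a path implies distinct end values -/
lemma path_ne {p : ℝ → ℂ} {p' : ℝ → ℂ}
    (hp : ∀ t ∈ Icc (0:ℝ) 1, HasDerivWithinAt p (p' t) (Icc (0:ℝ) 1) t)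
    (hpos : ∀ t ∈ Icc (0:ℝ) 1, 0 < (p' t).re) : (p 0).re < (p 1).re := by
  have hre : ∀ t ∈ Icc (0:ℝ) 1, HasDerivWithinAt (fun t => (p t).re) (p' t).re (Icc (0:ℝ) 1) t := by
    intro t ht
    exact Complex.reCLM.hasFDerivAt.comp_hasDerivWithinAt t (hp t ht)
  have hm : StrictMonoOn (fun t => (p t).re) (Icc (0:ℝ) 1) := by
    refine strictMonoOn_of_deriv_pos (convex_Icc 0 1)
      (fun t ht => (hre t ht).continuousWithinAt) ?_
    intro t ht
    rw [interior_Icc] at ht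
    have h1 := (hre t ⟨ht.1.le, ht.2.le⟩).hasDerivAt (Icc_mem_nhds ht.1 ht.2)
    rw [h1.deriv]
    exact hpos t ⟨ht.1.le, ht.2.le⟩
  exact hm (by simp) (by simp) zero_lt_one

lemma nw {ψ ψ' : ℂ → ℂ} {s : Set ℂ} (hs : Convex ℝ s) (h : ∀ z ∈ s, HasDerivAt ψ (ψ' z) z)
    (hpos : ∀ z ∈ s, 0 < (ψ' z).re) : InjOn ψ s := by
  intro a ha b hb hab
  by_contra hne
  have hba : b - a ≠ 0 := sub_ne_zero.2 (Ne.symm hne)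
  have hmem : ∀ t ∈ Icc (0:ℝ) 1, a + (t:ℂ) * (b - a) ∈ s := by
    intro t ht
    have := hs.add_smul_sub_mem ha hb ht
    simpa using this
  have := path_ne (p := fun t : ℝ => ψ (a + (t:ℂ) * (b - a)) / (b - a))
    (p' := fun t : ℝ => ψ' (a + (t:ℂ) * (b - a))) (fun t ht => ?_) (fun t ht => hpos _ (hmem t ht))
  · simp [hab] at this
  · have h1 : HasDerivAt (fun t : ℝ => a + (t:ℂ) * (b - a)) (1 * (b - a)) t :=
      ((Complex.ofRealCLM.hasDerivAt (x := t)).mul_const (b - a)).const_add a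
    have h2 := ((h _ (hmem t ht)).comp t h1).div_const (b - a)
    have e : ψ' (a + (t:ℂ) * (b - a)) * (1 * (b - a)) / (b - a) = ψ' (a + (t:ℂ) * (b - a)) := by
      field_simp
    rw [e] at h2
    exact h2.hasDerivWithinAt

variable {k : ℂ → ℂ}

lemma disc_hasDeriv (hk : DifferentiableOn ℂ k (ball 0 1)) {z : ℂ} (hz : z ∈ ball (0:ℂ) 1) :
    HasDerivAt (fun z => z * k z) (k z + z * deriv k z) z := by
  have h1 := (hasDerivAt_id z).mul
    (hk.differentiableAt (isOpen_ball.mem_nhds hz)).hasDerivAt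
  convert! h1 using 1
  simp

lemma disc_log (hk : DifferentiableOn ℂ k (ball 0 1)) (hk0 : k 0 = 1)
    (hne : ∀ z ∈ ball (0:ℂ) 1, k z ≠ 0) :
    ∃ q : ℂ → ℂ, ∀ z ∈ ball (0:ℂ) 1, HasDerivAt q (deriv k z / k z) z ∧ Complex.exp (q z) = k z := by
  have hk' : DifferentiableOn ℂ (deriv k) (ball 0 1) := hk.deriv isOpen_ball
  obtain ⟨q, hq0, hq⟩ := (hk'.div hk hne).isExactOn_ball.with_val_at 0 0
  refine ⟨q, fun z hz => ⟨hq z hz, ?_⟩⟩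
  have hd : ∀ z ∈ ball (0:ℂ) 1, HasDerivAt (fun z => k z * Complex.exp (-q z)) 0 z := by
    intro z hz
    have h1 := (hk.differentiableAt (isOpen_ball.mem_nhds hz)).hasDerivAt.mul (hq z hz).neg.cexp
    convert! h1 using 1
    have := hne z hz
    simp only [Pi.div_apply]
    field_simp
    simp
  have hc := (convex_ball (0:ℂ) 1).is_const_of_fderivWithin_eq_zero (𝕜 := ℂ)
    (f := fun z => k z * Complex.exp (-q z))
    (fun z hz => (hd z hz).differentiableAt.differentiableWithinAt)
    (fun z hz => by
      rw [fderivWithin_of_isOpen isOpen_ball hz]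
      ext
      simp [(hd z hz).deriv]) hz (mem_ball_self one_pos)
  simp only [hq0, hk0, neg_zero, Complex.exp_zero, mul_one] at hc
  rw [Complex.exp_neg] at hc
  have := Complex.exp_ne_zero (q z)
  field_simp at hc
  exact hc.symm

lemma disc_inj (hk : DifferentiableOn ℂ k (ball 0 1)) (hk0 : k 0 = 1)
    (hne : ∀ z ∈ ball (0:ℂ) 1, k z ≠ 0)
    (hpos : ∀ z ∈ ball (0:ℂ) 1, 0 < (1 + z * deriv k z / k z).re) :
    InjOn (fun z => z * k z) (ball 0 1) := by
  obtain ⟨q, hq⟩ := disc_log hk hk0 hne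
  have hmem : ∀ w ∈ {w : ℂ | w.re < 0}, Complex.exp w ∈ ball (0:ℂ) 1 := by
    intro w hw
    simpa [Complex.norm_exp] using hw
  have hψ : InjOn (fun w => w + q (Complex.exp w)) {w : ℂ | w.re < 0} := by
    refine nw (ψ' := fun w => 1 + Complex.exp w * deriv k (Complex.exp w) / k (Complex.exp w))
      (convex_halfSpace_re_lt 0) ?_ (fun w hw => hpos _ (hmem w hw))
    intro w hw
    have := (hasDerivAt_id w).add ((hq _ (hmem w hw)).1.comp w (Complex.hasDerivAt_exp w))
    convert! this using 1
    ring
  intro a ha b hb hab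
  simp only at hab
  have hab0 : a = 0 ↔ b = 0 := by
    constructor
    · rintro rfl
      have : b * k b = 0 := by rw [← hab]; simp
      exact (mul_eq_zero.1 this).resolve_right (hne b hb)
    · rintro rfl
      have : a * k a = 0 := by rw [hab]; simp
      exact (mul_eq_zero.1 this).resolve_right (hne a ha)
  by_cases ha0 : a = 0
  · rw [ha0, hab0.1 ha0]
  have hb0 : b ≠ 0 := fun h => ha0 (hab0.2 h)
  have hlog : ∀ c ∈ ball (0:ℂ) 1, c ≠ 0 → (Complex.log c).re < 0 := by
    intro c hc hc0
    rw [Complex.log_re]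
    exact Real.log_neg (norm_pos_iff.2 hc0) (by simpa using hc)
  have key : Complex.exp (Complex.log a + q a) = Complex.exp (Complex.log b + q b) := by
    rw [Complex.exp_add, Complex.exp_add, Complex.exp_log ha0, Complex.exp_log hb0,
      (hq a ha).2, (hq b hb).2, hab]
  obtain ⟨n, hn⟩ := Complex.exp_eq_exp_iff_exists_int.1 key
  have he : Complex.exp (Complex.log b + n * (2 * Real.pi * Complex.I)) = b := by
    rw [Complex.exp_add, Complex.exp_int_mul_two_pi_mul_I, mul_one, Complex.exp_log hb0]
  have := hψ (x₁ := Complex.log a) (x₂ := Complex.log b + n * (2 * Real.pi * Complex.I))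
    (hlog a ha ha0) (by simpa using hlog b hb hb0) (by
      show Complex.log a + q (Complex.exp (Complex.log a)) = _ + q (Complex.exp (_ + _))
      rw [he, Complex.exp_log ha0, hn]
      ring)
  rw [← Complex.exp_log ha0, this, he]

lemma slope_neg_right {N : ℝ → ℝ} {d x : ℝ} (h : HasDerivAt N d x) (hd : d < 0) :
    ∀ᶠ y in 𝓝[>] x, N y < N x := by
  have h1 := (hasDerivWithinAt_iff_tendsto_slope' (s := Ioi x) (by simp)).1
    (h.hasDerivWithinAt (s := Ioi x))
  filter_upwards [h1.eventually (gt_mem_nhds hd), self_mem_nhdsWithin] with y hy hxy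
  rw [slope_def_field] at hy
  have hxy' : 0 < y - x := sub_pos.2 hxy
  have := (div_neg_iff.1 hy)
  rcases this with h | h
  · linarith [h.2]
  · linarith [h.1]

lemma disc_star (hk : DifferentiableOn ℂ k (ball 0 1))
    (hne : ∀ z ∈ ball (0:ℂ) 1, k z ≠ 0)
    (hpos : ∀ z ∈ ball (0:ℂ) 1, 0 < (1 + z * deriv k z / k z).re)
    {z₀ : ℂ} (hz₀ : z₀ ∈ ball (0:ℂ) 1) {t : ℝ} (ht : t ∈ Icc (0:ℝ) 1) :
    ∃ z ∈ ball (0:ℂ) 1, z * k z = t * (z₀ * k z₀) := by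
  set a := z₀ * k z₀ with ha
  by_cases ha0 : a = 0
  · exact ⟨0, mem_ball_self one_pos, by simp [ha0]⟩
  have hz₀' : ‖z₀‖ < 1 := by simpa using hz₀
  have hsub : closedBall (0:ℂ) ‖z₀‖ ⊆ ball 0 1 := closedBall_subset_ball hz₀'
  have hcomp : IsCompact ((fun z => z * k z) '' closedBall (0:ℂ) ‖z₀‖) :=
    (isCompact_closedBall _ _).image_of_continuousOn
      (continuousOn_id.mul (hk.continuousOn.mono hsub))
  set S : Set ℝ := (fun τ : ℝ => ((1 - τ : ℝ) : ℂ) * a) ⁻¹' ((fun z => z * k z) '' closedBall (0:ℂ) ‖z₀‖)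
    with hS
  have hSc : IsClosed S := hcomp.isClosed.preimage (by fun_prop)
  have hsubS : Icc (0:ℝ) 1 ⊆ S := by
    refine IsClosed.Icc_subset_of_forall_mem_nhdsWithin (hSc.inter isClosed_Icc) ?_ ?_
    · exact ⟨z₀, by simp, by simp [ha]⟩
    · rintro x ⟨⟨z, hz, hzx⟩, hx0, hx1⟩
      have hzb := hsub hz
      simp only at hzx
      have hx1' : ((1 - x : ℝ) : ℂ) ≠ 0 := by
        exact_mod_cast (sub_pos.2 hx1).ne'
      have hz0 : z ≠ 0 := by
        rintro rfl
        have : ((1 - x : ℝ) : ℂ) * a = 0 := by rw [← hzx]; simp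
        exact (mul_ne_zero hx1' ha0) this
      set c : ℂ := 1 + z * deriv k z / k z with hc
      have hcpos : 0 < c.re := hpos z hzb
      have hc0 : c ≠ 0 := by intro h; rw [h] at hcpos; simp at hcpos
      have hkz := hne z hzb
      have hφ' : k z + z * deriv k z = k z * c := by rw [hc]; field_simp
      have hstrict : HasStrictDerivAt (fun z => z * k z) (k z * c) z := by
        have han : AnalyticAt ℂ (fun z => z * k z) z :=
          DifferentiableOn.analyticAt (s := ball 0 1) (differentiableOn_id.mul hk)
            (isOpen_ball.mem_nhds hzb)
        have := han.hasStrictDerivAt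
        rwa [(disc_hasDeriv hk hzb).deriv, hφ'] at this
      have hd0 : k z * c ≠ 0 := mul_ne_zero hkz hc0
      set g := hstrict.localInverse _ _ _ hd0 with hg
      have hgr : ∀ᶠ y in 𝓝 (z * k z), g y * k (g y) = y := hstrict.eventually_right_inverse hd0
      have hgd : HasDerivAt g (k z * c)⁻¹ (z * k z) := (hstrict.to_localInverse hd0).hasDerivAt
      have hgz : g (z * k z) = z := by
        exact HasStrictFDerivAt.localInverse_apply_image (hstrict.hasStrictFDerivAt_equiv hd0)
      have hline : HasDerivAt (fun τ : ℝ => ((1 - τ : ℝ) : ℂ) * a) (-a) x := by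
        have h1 : HasDerivAt (fun τ : ℝ => ((1 - τ : ℝ) : ℂ)) (-1) x := by
          have := ((hasDerivAt_id x).const_sub 1).ofReal_comp
          simpa using this
        simpa using h1.mul_const a
      have hγ : HasDerivAt (fun τ : ℝ => g (((1 - τ : ℝ) : ℂ) * a)) ((k z * c)⁻¹ * (-a)) x := by
        rw [hzx] at hgd
        exact hgd.comp x hline
      have hN := hγ.norm_sq
      have hneg := slope_neg_right hN (by
        rw [← hzx, hgz, Complex.inner]
        have ha' : a = z * k z / ((1 - x : ℝ) : ℂ) := by
          rw [hzx]; field_simp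
        have e : ((k z * c)⁻¹ * -a) * (starRingEnd ℂ) z
            = ((-(Complex.normSq z / (1 - x)) : ℝ) : ℂ) * c⁻¹ := by
          rw [ha']
          have := Complex.normSq_eq_conj_mul_self (z := z)
          push_cast
          push_cast at hx1'
          rw [this]
          field_simp
        rw [e, Complex.re_ofReal_mul, Complex.inv_re]
        have h1 : 0 < Complex.normSq z := Complex.normSq_pos.2 hz0
        have h2 : 0 < Complex.normSq c := Complex.normSq_pos.2 hc0
        have h3 : 0 < 1 - x := sub_pos.2 hx1
        have : 0 < Complex.normSq z / (1 - x) * (c.re / Complex.normSq c) := by positivity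
        linarith)
      have hev : ∀ᶠ τ in 𝓝 x, (fun y => g y * k (g y) = y) (((1 - τ : ℝ) : ℂ) * a) := by
        rw [hzx] at hgr
        exact hline.continuousAt.eventually hgr
      filter_upwards [hneg, hev.filter_mono nhdsWithin_le_nhds] with τ h1 h2
      refine ⟨g (((1 - τ : ℝ) : ℂ) * a), ?_, h2⟩
      rw [← hzx, hgz] at h1
      have h3 := lt_of_pow_lt_pow_left₀ 2 (norm_nonneg z) h1
      rw [mem_closedBall_zero_iff] at hz ⊢
      exact h3.le.trans hz
  obtain ⟨z, hz, hzt⟩ := hsubS (show 1 - t ∈ Icc (0:ℝ) 1 from ⟨by linarith [ht.2], by linarith [ht.1]⟩)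
  exact ⟨z, hsub hz, by simpa using hzt⟩


lemma slope_nonneg_left {N : ℝ → ℝ} {d : ℝ} (h : HasDerivWithinAt N d (Icc (0:ℝ) 1) 1)
    (hd : ∀ t ∈ Icc (0:ℝ) 1, N t ≤ N 1) : 0 ≤ d := by
  have h1 := (hasDerivWithinAt_iff_tendsto_slope' (s := Ico (0:ℝ) 1) (by simp)).1
    (h.mono Ico_subset_Icc_self)
  have : (𝓝[Ico (0:ℝ) 1] 1).NeBot := by
    rw [← mem_closure_iff_nhdsWithin_neBot, closure_Ico (by norm_num)]
    simp
  refine ge_of_tendsto h1 ?_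
  filter_upwards [self_mem_nhdsWithin] with y hy
  rw [slope_def_field]
  exact div_nonneg_of_nonpos (by linarith [hd y ⟨hy.1, hy.2.le⟩]) (by linarith [hy.2])

lemma disc_minv (hk : DifferentiableOn ℂ k (ball 0 1)) {m : ℂ → ℂ}
    (hm : DifferentiableOn ℂ m ((fun z => z * k z) '' ball 0 1))
    (hleft : ∀ z ∈ ball (0:ℂ) 1, m (z * k z) = z) {z : ℂ} (hz : z ∈ ball (0:ℂ) 1) :
    k z + z * deriv k z ≠ 0 ∧ HasDerivWithinAt m (k z + z * deriv k z)⁻¹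
      ((fun z => z * k z) '' ball 0 1) (z * k z) := by
  have h1 := (hm (z * k z) (mem_image_of_mem (fun z => z * k z) hz)).hasDerivWithinAt
  have h2 : HasDerivWithinAt (fun z => z * k z) (k z + z * deriv k z) (ball 0 1) z :=
    (disc_hasDeriv hk hz).hasDerivWithinAt
  have h3 : HasDerivWithinAt (m ∘ fun z => z * k z) _ (ball 0 1) z :=
    HasDerivWithinAt.comp z h1 h2 (mapsTo_image _ _)
  have h4 : HasDerivWithinAt (m ∘ fun z => z * k z) 1 (ball 0 1) z :=
    (hasDerivWithinAt_id z _).congr (fun y hy => hleft y hy) (hleft z hz)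
  have h5 := (h3.hasDerivAt (isOpen_ball.mem_nhds hz)).unique
    (h4.hasDerivAt (isOpen_ball.mem_nhds hz))
  have hne : k z + z * deriv k z ≠ 0 := right_ne_zero_of_mul_eq_one h5
  refine ⟨hne, ?_⟩
  rwa [eq_inv_of_mul_eq_one_left h5] at h1

lemma disc_line (a : ℂ) (t : ℝ) : HasDerivAt (fun t : ℝ => (t : ℂ) * a) a t := by
  simpa using (Complex.ofRealCLM.hasDerivAt (x := t)).mul_const a

lemma disc_conv (hk : DifferentiableOn ℂ k (ball 0 1)) (hk0 : k 0 = 1) {m : ℂ → ℂ}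
    (hm : DifferentiableOn ℂ m ((fun z => z * k z) '' ball 0 1))
    (hleft : ∀ z ∈ ball (0:ℂ) 1, m (z * k z) = z)
    (hstar : ∀ z ∈ ball (0:ℂ) 1, ∀ t ∈ Icc (0:ℝ) 1,
      ∃ z' ∈ ball (0:ℂ) 1, z' * k z' = t * (z * k z)) :
    (∀ z ∈ ball (0:ℂ) 1, k z ≠ 0) ∧
    ∀ z ∈ ball (0:ℂ) 1, 0 < (1 + z * deriv k z / k z).re := by
  have hm0 : m 0 = 0 := by simpa using hleft 0 (mem_ball_self one_pos)
  have hne : ∀ z ∈ ball (0:ℂ) 1, k z ≠ 0 := by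
    intro z hz h
    have h1 := hleft z hz
    rw [h, mul_zero, hm0] at h1
    rw [← h1, hk0] at h
    exact one_ne_zero h
  have hmem : ∀ z ∈ ball (0:ℂ) 1, ∀ t ∈ Icc (0:ℝ) 1,
      (t:ℂ) * (z * k z) ∈ (fun z => z * k z) '' ball 0 1 := by
    intro z hz t ht
    obtain ⟨z', hz', h⟩ := hstar z hz t ht
    exact ⟨z', hz', h⟩
  have hω : ∀ t ∈ Icc (0:ℝ) 1, ∀ z ∈ ball (0:ℂ) 1, ‖m (t * (z * k z))‖ ≤ ‖z‖ := by
    intro t ht z hz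
    refine Complex.norm_le_norm_of_mapsTo_ball (R := 1) (f := fun z => m (t * (z * k z)))
      ?_ ?_ (by simp [hm0]) (by simpa using hz)
    · exact hm.comp ((differentiableOn_id.mul hk).const_mul _) (fun y hy => hmem y hy t ht)
    · intro y hy
      obtain ⟨z', hz', h⟩ := hstar y hy t ht
      show m (t * (y * k y)) ∈ _
      rw [← h, hleft z' hz']
      exact ball_subset_closedBall hz'
  have hnn : ∀ z ∈ ball (0:ℂ) 1, 0 ≤ (1 + z * deriv k z / k z).re := by
    intro z hz
    by_cases hz0 : z = 0
    · simp [hz0]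
    obtain ⟨hd0, hd⟩ := disc_minv hk hm hleft hz
    have hγ : HasDerivWithinAt (fun t : ℝ => m ((t:ℂ) * (z * k z)))
        ((k z + z * deriv k z)⁻¹ * (z * k z)) (Icc 0 1) 1 := by
      have hd' : HasDerivWithinAt m (k z + z * deriv k z)⁻¹
        ((fun z => z * k z) '' ball 0 1) (((1:ℝ):ℂ) * (z * k z)) := by simpa using hd
      exact hd'.comp (1:ℝ) (disc_line (z * k z) 1).hasDerivWithinAt (fun t ht => hmem z hz t ht)
    have hN := slope_nonneg_left hγ.norm_sq (fun t ht => by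
      have h1 := hω t ht z hz
      simp only [Complex.ofReal_one, one_mul, hleft z hz]
      gcongr)
    simp only [Complex.ofReal_one, one_mul, hleft z hz, Complex.inner] at hN
    set c : ℂ := 1 + z * deriv k z / k z with hc
    have hkz := hne z hz
    have hφ' : k z + z * deriv k z = k z * c := by rw [hc]; field_simp
    have hc0 : c ≠ 0 := by intro h; rw [hφ', h, mul_zero] at hd0; exact hd0 rfl
    have e : (k z + z * deriv k z)⁻¹ * (z * k z) * (starRingEnd ℂ) z
        = ((Complex.normSq z : ℝ) : ℂ) * c⁻¹ := by
      rw [hφ', Complex.normSq_eq_conj_mul_self]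
      field_simp
    rw [e, Complex.re_ofReal_mul, Complex.inv_re] at hN
    have h1 : 0 < Complex.normSq z := Complex.normSq_pos.2 hz0
    have h2 : 0 < Complex.normSq c := Complex.normSq_pos.2 hc0
    by_contra hlt
    push Not at hlt
    have : 0 < Complex.normSq z * (-c.re / Complex.normSq c) := by
      have : 0 < - c.re := by linarith
      positivity
    rw [neg_div] at this
    linarith
  refine ⟨hne, fun z hz => lt_of_le_of_ne (hnn z hz) (fun h0 => ?_)⟩
  have hP : DifferentiableOn ℂ (fun z => Complex.exp (-(1 + z * deriv k z / k z))) (ball 0 1) := by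
    have hk' : DifferentiableOn ℂ (deriv k) (ball 0 1) := hk.deriv isOpen_ball
    exact ((differentiableOn_const _).add ((differentiableOn_id.mul hk').div hk hne)).neg.cexp
  have hmax : IsMaxOn (norm ∘ fun z => Complex.exp (-(1 + z * deriv k z / k z))) (ball 0 1) z := by
    intro y hy
    simp only [mem_ofPred_eq, Function.comp, Complex.norm_exp, Complex.neg_re, Real.exp_le_exp]
    rw [← h0]
    linarith [hnn y hy]
  have := Complex.norm_eqOn_of_isPreconnected_of_isMaxOn (convex_ball (0:ℂ) 1).isPreconnected
    isOpen_ball hP hz hmax (mem_ball_self one_pos)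
  simp only [Function.comp, Function.const, Complex.norm_exp, Complex.neg_re, ← h0] at this
  simp at this

lemma disc_close (hk : DifferentiableOn ℂ k (ball 0 1)) (hk0 : k 0 = 1) {m : ℂ → ℂ}
    (hm : DifferentiableOn ℂ m ((fun z => z * k z) '' ball 0 1))
    (hleft : ∀ z ∈ ball (0:ℂ) 1, m (z * k z) = z)
    (hstar : ∀ z ∈ ball (0:ℂ) 1, ∀ t ∈ Icc (0:ℝ) 1,
      ∃ z' ∈ ball (0:ℂ) 1, z' * k z' = t * (z * k z))
    {p : ℂ → ℂ} (hp : ∀ z ∈ ball (0:ℂ) 1, HasDerivAt p (k z) z) (hp0 : p 0 = 0)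
    {z : ℂ} (hz : z ∈ ball (0:ℂ) 1) (hz0 : z ≠ 0) : p z ≠ 0 := by
  obtain ⟨hne, hpos⟩ := disc_conv hk hk0 hm hleft hstar
  have hm0 : m 0 = 0 := by simpa using hleft 0 (mem_ball_self one_pos)
  have ha : z * k z ≠ 0 := mul_ne_zero hz0 (hne z hz)
  intro h
  have := path_ne (p := fun t : ℝ => p (m ((t:ℂ) * (z * k z))) / (z * k z))
    (p' := fun t : ℝ => (1 + m ((t:ℂ) * (z * k z)) * deriv k (m ((t:ℂ) * (z * k z)))
      / k (m ((t:ℂ) * (z * k z))))⁻¹) (fun t ht => ?_) (fun t ht => ?_)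
  · simp [hm0, hp0, hleft z hz, h] at this
  · obtain ⟨y, hy, hyt⟩ := hstar z hz t ht
    have hmy : m ((t:ℂ) * (z * k z)) = y := by rw [← hyt, hleft y hy]
    obtain ⟨hd0, hd⟩ := disc_minv hk hm hleft hy
    rw [hyt] at hd
    have h1 := hd.comp t (disc_line (z * k z) t).hasDerivWithinAt (s := Icc 0 1) (fun s hs => by
      obtain ⟨y', hy', hyt'⟩ := hstar z hz s hs
      exact ⟨y', hy', hyt'⟩)
    have hpy := hp y hy
    rw [← hmy] at hpy
    have h2 := (hpy.comp_hasDerivWithinAt t h1).div_const (z * k z)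
    rw [hmy] at h2 ⊢
    convert! h2 using 1
    have hky := hne y hy
    have hkz := hne z hz
    have e : (1 + y * deriv k y / k y) = (k y + y * deriv k y) / k y := by field_simp
    rw [e]
    field_simp
  · obtain ⟨y, hy, hyt⟩ := hstar z hz t ht
    have hmy : m ((t:ℂ) * (z * k z)) = y := by rw [← hyt, hleft y hy]
    simp only [hmy]
    have h1 := hpos y hy
    rw [Complex.inv_re]
    refine div_pos h1 (Complex.normSq_pos.2 ?_)
    intro h; rw [h] at h1; simp at h1

end Disc

section Main

lemma rank_one {X : Type*} [NormedAddCommGroup X] [NormedSpace ℂ X] (c : ℂ) (lam : X →L[ℂ] ℂ)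
    (x : X) (hc : c ≠ 0) (hcl : c + lam x ≠ 0) :
    ∃ A : X →L[ℂ] X,
      A.comp (c • ContinuousLinearMap.id ℂ X + lam.smulRight x) = ContinuousLinearMap.id ℂ X ∧
      (c • ContinuousLinearMap.id ℂ X + lam.smulRight x).comp A = ContinuousLinearMap.id ℂ X := by
  refine ⟨c⁻¹ • (ContinuousLinearMap.id ℂ X - (c + lam x)⁻¹ • lam.smulRight x), ?_, ?_⟩
  · ext v
    simp only [ContinuousLinearMap.comp_apply, ContinuousLinearMap.add_apply,
      ContinuousLinearMap.smul_apply, ContinuousLinearMap.id_apply,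
      ContinuousLinearMap.smulRight_apply, ContinuousLinearMap.sub_apply, map_add, map_smul,
      smul_eq_mul]
    match_scalars
    · field_simp
    · field_simp
      ring
  · ext v
    simp only [ContinuousLinearMap.comp_apply, ContinuousLinearMap.add_apply,
      ContinuousLinearMap.smul_apply, ContinuousLinearMap.id_apply,
      ContinuousLinearMap.smulRight_apply, ContinuousLinearMap.sub_apply, map_sub, map_smul,
      smul_eq_mul]
    match_scalars
    · field_simp
    · field_simp
      ring

lemma hasFDerivAt_smul_self {X : Type*} [NormedAddCommGroup X] [NormedSpace ℂ X] {g : X → ℂ}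
    {H : X → X} (hg : DifferentiableOn ℂ g (ball (0 : X) 1))
    (hH : ∀ x ∈ ball (0 : X) 1, H x = g x • x) {x : X} (hx : x ∈ ball (0 : X) 1) :
    HasFDerivAt H (g x • ContinuousLinearMap.id ℂ X + (fderiv ℂ g x).smulRight x) x := by
  have h1 := (hg.differentiableAt (isOpen_ball.mem_nhds hx)).hasFDerivAt.smul (hasFDerivAt_id x)
  refine h1.congr_of_eventuallyEq ?_
  filter_upwards [isOpen_ball.mem_nhds hx] with y hy
  exact hH y hy

lemma line_mem {X : Type*} [NormedAddCommGroup X] [NormedSpace ℂ X] {u : X} (hu : ‖u‖ = 1) {z : ℂ} :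
    z • u ∈ ball (0 : X) 1 ↔ z ∈ ball (0:ℂ) 1 := by
  simp [norm_smul, hu]

lemma line_deriv {X : Type*} [NormedAddCommGroup X] [NormedSpace ℂ X] {g : X → ℂ}
    (hg : DifferentiableOn ℂ g (ball (0 : X) 1)) {u : X} (hu : ‖u‖ = 1) {z : ℂ}
    (hz : z ∈ ball (0:ℂ) 1) :
    HasDerivAt (fun z : ℂ => g (z • u)) (fderiv ℂ g (z • u) u) z := by
  have h1 := (hg.differentiableAt (isOpen_ball.mem_nhds ((line_mem hu).2 hz))).hasFDerivAt
  have h2 : HasDerivAt (fun z : ℂ => z • u) u z := by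
    simpa using (hasDerivAt_id z).smul_const u
  exact h1.comp_hasDerivAt z h2

lemma exists_line {X : Type*} [NormedAddCommGroup X] [NormedSpace ℂ X] {x : X}
    (hx : x ∈ ball (0 : X) 1) (hx0 : x ≠ 0) :
    ∃ u : X, ‖u‖ = 1 ∧ ∃ z ∈ ball (0:ℂ) 1, z ≠ 0 ∧ x = z • u := by
  have hn : (‖x‖ : ℂ) ≠ 0 := by exact_mod_cast (norm_pos_iff.2 hx0).ne'
  refine ⟨(‖x‖ : ℂ)⁻¹ • x, ?_, (‖x‖ : ℂ), ?_, hn, ?_⟩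
  · rw [norm_smul, norm_inv, Complex.norm_real, norm_norm, inv_mul_cancel₀]
    exact (norm_pos_iff.2 hx0).ne'
  · simpa using hx
  · rw [smul_inv_smul₀ hn]

lemma star_forward {X : Type*} [NormedAddCommGroup X] [NormedSpace ℂ X] [CompleteSpace X]
    {g : X → ℂ} (hg : DifferentiableOn ℂ g (ball (0 : X) 1)) (hg0 : g 0 = 1)
    {G : X → X} (hG : ∀ x ∈ ball (0 : X) 1, G x = g x • x)
    (hne : ∀ x ∈ ball (0 : X) 1, g x ≠ 0)
    (hpos : ∀ x ∈ ball (0 : X) 1, 0 < (1 + fderiv ℂ g x x / g x).re) :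
    IsStarlikeOn G (ball (0 : X) 1) := by
  have h0 : (0 : X) ∈ ball (0 : X) 1 := mem_ball_self one_pos
  have hG0 : G 0 = 0 := by rw [hG 0 h0, smul_zero]
  have hGd : DifferentiableOn ℂ G (ball (0 : X) 1) := fun x hx =>
    (hasFDerivAt_smul_self hg hG hx).differentiableAt.differentiableWithinAt
  have hk : ∀ u : X, ‖u‖ = 1 → DifferentiableOn ℂ (fun z : ℂ => g (z • u)) (ball 0 1) :=
    fun u hu z hz => (line_deriv hg hu hz).differentiableAt.differentiableWithinAt
  have hkne : ∀ u : X, ‖u‖ = 1 → ∀ z ∈ ball (0:ℂ) 1, (fun z : ℂ => g (z • u)) z ≠ 0 :=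
    fun u hu z hz => hne _ ((line_mem hu).2 hz)
  have hkpos : ∀ u : X, ‖u‖ = 1 → ∀ z ∈ ball (0:ℂ) 1,
      0 < (1 + z * deriv (fun z : ℂ => g (z • u)) z / (fun z : ℂ => g (z • u)) z).re := by
    intro u hu z hz
    rw [(line_deriv hg hu hz).deriv]
    have := hpos _ ((line_mem hu).2 hz)
    rwa [map_smul, smul_eq_mul] at this
  have hGline : ∀ u : X, ‖u‖ = 1 → ∀ z ∈ ball (0:ℂ) 1, G (z • u) = (z * g (z • u)) • u := by
    intro u hu z hz
    rw [hG _ ((line_mem hu).2 hz), smul_smul, mul_comm]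
  have hzero : ∀ y ∈ ball (0 : X) 1, G y = 0 → y = 0 := by
    intro y hy h
    rw [hG y hy] at h
    exact (smul_eq_zero.1 h).resolve_left (hne y hy)
  have hinj : InjOn G (ball (0 : X) 1) := by
    intro x hx y hy hxy
    by_cases hx0 : x = 0
    · rw [hx0] at hxy ⊢
      rw [hG0] at hxy
      exact (hzero y hy hxy.symm).symm
    obtain ⟨u, hu, z, hz, hz0, rfl⟩ := exists_line hx hx0
    have hu0 : u ≠ 0 := by rintro rfl; simp at hu
    have hyu : y = ((g y)⁻¹ * (z * g (z • u))) • u := by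
      rw [mul_smul, ← hGline u hu z hz, hxy, hG y hy, inv_smul_smul₀ (hne y hy)]
    generalize (g y)⁻¹ * (z * g (z • u)) = z2 at hyu
    subst hyu
    have hz2 := (line_mem hu).1 hy
    rw [hGline u hu z hz, hGline u hu z2 hz2] at hxy
    have := smul_left_injective ℂ hu0 hxy
    rw [disc_inj (hk u hu) (by simpa using hg0) (hkne u hu) (hkpos u hu) hz hz2 this]
  refine ⟨⟨hGd, hinj, Function.invFunOn G (ball (0 : X) 1), ?_,
    fun x hx => hinj.leftInvOn_invFunOn hx⟩, hG0, ?_⟩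
  · rintro _ ⟨x, hx, rfl⟩
    have hs := hol_strict isOpen_ball hGd hx
    rw [(hasFDerivAt_smul_self hg hG hx).fderiv] at hs
    obtain ⟨A, hA1, hA2⟩ := rank_one (g x) (fderiv ℂ g x) x (hne x hx) (by
      have h1 := hpos x hx
      intro h2
      have h3 : 1 + fderiv ℂ g x x / g x = (g x + fderiv ℂ g x x) / g x := by
        have := hne x hx
        field_simp
      rw [h3, h2] at h1
      simp at h1)
    let e : X ≃L[ℂ] X := ContinuousLinearEquiv.equivOfInverse
      (g x • ContinuousLinearMap.id ℂ X + (fderiv ℂ g x).smulRight x) A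
      (fun v => DFunLike.congr_fun hA1 v) (fun v => DFunLike.congr_fun hA2 v)
    have hs' : HasStrictFDerivAt G (e : X →L[ℂ] X) x := hs
    refine (hs'.to_local_left_inverse (g := Function.invFunOn G (ball (0 : X) 1))
      ?_).hasFDerivAt.differentiableAt.differentiableWithinAt
    filter_upwards [isOpen_ball.mem_nhds hx] with y hy
    exact hinj.leftInvOn_invFunOn hy
  · rintro _ ⟨x, hx, rfl⟩ t ht
    by_cases hx0 : x = 0
    · exact ⟨0, h0, by rw [hx0, hG0, smul_zero]⟩
    obtain ⟨u, hu, z, hz, hz0, rfl⟩ := exists_line hx hx0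
    obtain ⟨z', hz', h⟩ := disc_star (hk u hu) (hkne u hu) (hkpos u hu) hz ht
    refine ⟨z' • u, (line_mem hu).2 hz', ?_⟩
    rw [hGline u hu z hz, hGline u hu z' hz', h, mul_smul (t : ℂ), Complex.coe_smul]

lemma star_backward {X : Type*} [NormedAddCommGroup X] [NormedSpace ℂ X]
    {f g : X → ℂ} (hf : DifferentiableOn ℂ f (ball (0 : X) 1))
    (hg : DifferentiableOn ℂ g (ball (0 : X) 1)) (hg0 : g 0 = 1)
    (hfg : ∀ x ∈ ball (0 : X) 1, g x = f x + fderiv ℂ f x x)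
    {G : X → X} (hG : ∀ x ∈ ball (0 : X) 1, G x = g x • x)
    (hst : IsStarlikeOn G (ball (0 : X) 1)) :
    ∀ x ∈ ball (0 : X) 1, x ≠ 0 →
      f x ≠ 0 ∧ g x ≠ 0 ∧ 0 < (1 + fderiv ℂ g x x / g x).re := by
  obtain ⟨⟨hGd, hinj, h, hh, hhl⟩, hG0, hstar⟩ := hst
  have h0 : (0 : X) ∈ ball (0 : X) 1 := mem_ball_self one_pos
  have hne : ∀ x ∈ ball (0 : X) 1, g x ≠ 0 := by
    intro x hx hx0
    have h1 : G x = G 0 := by rw [hG x hx, hx0, zero_smul, hG0]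
    rw [hinj hx h0 h1, hg0] at hx0
    exact one_ne_zero hx0
  intro x hx hx0
  obtain ⟨u, hu, z, hz, hz0, rfl⟩ := exists_line hx hx0
  have hu0 : u ≠ 0 := by rintro rfl; simp at hu
  obtain ⟨l, -, hl⟩ := exists_dual_vector ℂ u (norm_ne_zero_iff.2 hu0)
  have hlu : l u = 1 := by rw [hl, hu]; simp
  have hk : DifferentiableOn ℂ (fun z : ℂ => g (z • u)) (ball 0 1) :=
    fun z hz => (line_deriv hg hu hz).differentiableAt.differentiableWithinAt
  have hGline : ∀ z ∈ ball (0:ℂ) 1, G (z • u) = (z * g (z • u)) • u := by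
    intro z hz
    rw [hG _ ((line_mem hu).2 hz), smul_smul, mul_comm]
  have hm : DifferentiableOn ℂ (fun w : ℂ => l (h (w • u)))
      ((fun z => z * (fun z : ℂ => g (z • u)) z) '' ball 0 1) := by
    refine l.differentiable.comp_differentiableOn (hh.comp (t := G '' ball (0 : X) 1)
      (f := fun w : ℂ => w • u) ?_ ?_)
    · exact (differentiable_id.smul_const u).differentiableOn
    · rintro _ ⟨y, hy, rfl⟩
      exact ⟨y • u, (line_mem hu).2 hy, hGline y hy⟩
  have hleft : ∀ z ∈ ball (0:ℂ) 1,
      (fun w : ℂ => l (h (w • u))) (z * (fun z : ℂ => g (z • u)) z) = z := by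
    intro y hy
    simp only
    rw [← hGline y hy, hhl _ ((line_mem hu).2 hy), map_smul, hlu, smul_eq_mul, mul_one]
  have hst' : ∀ z ∈ ball (0:ℂ) 1, ∀ t ∈ Icc (0:ℝ) 1, ∃ z' ∈ ball (0:ℂ) 1,
      z' * (fun z : ℂ => g (z • u)) z' = t * (z * (fun z : ℂ => g (z • u)) z) := by
    intro z hz t ht
    obtain ⟨y, hy, hyt⟩ := hstar _ (mem_image_of_mem G ((line_mem hu).2 hz)) t ht
    have hyt2 : G y = ((t:ℂ) * (z * g (z • u))) • u := by
      rw [hyt, hGline z hz, mul_smul (t : ℂ), Complex.coe_smul]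
    have hyu : y = ((g y)⁻¹ * ((t:ℂ) * (z * g (z • u)))) • u := by
      rw [mul_smul, ← hyt2, hG y hy, inv_smul_smul₀ (hne y hy)]
    obtain ⟨c, hc⟩ : ∃ c : ℂ, y = c • u := ⟨_, hyu⟩
    subst hc
    have hcb := (line_mem hu).1 hy
    refine ⟨c, hcb, ?_⟩
    rw [hGline c hcb] at hyt2
    exact smul_left_injective ℂ hu0 hyt2
  obtain ⟨-, hpos⟩ := disc_conv hk (by simpa using hg0) hm hleft hst'
  refine ⟨?_, hne _ hx, ?_⟩
  · have := disc_close hk (by simpa using hg0) hm hleft hst' (p := fun z : ℂ => z * f (z • u))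
      (fun y hy => by
        have h1 := (hasDerivAt_id y).mul (line_deriv hf hu hy)
        convert! h1 using 1
        rw [hfg _ ((line_mem hu).2 hy), map_smul]
        simp) (by simp) hz hz0
    exact right_ne_zero_of_mul this
  · have := hpos z hz
    rw [(line_deriv hg hu hz).deriv] at this
    rwa [map_smul, smul_eq_mul]

end Main

/-- **Alexander-type theorem.** Let `F(x) = f(x)·x` on the unit ball `𝔹` of a complex
Banach space, with `f` holomorphic and `f(0) = 1`, and let `G(x) = DF(x)x`. Then `F` is
quasi-convex of type `B` on `𝔹` (i.e. for every `x ∈ 𝔹 \ {0}`, `DF(x)` is invertible and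
`Re l_x([DF(x)]⁻¹(D²F(x)(x,x) + DF(x)x)) > 0` for every `l_x ∈ T(x)`) if and only if `G`
is starlike on `𝔹`. -/
theorem stmt17 {X : Type*} [NormedAddCommGroup X] [NormedSpace ℂ X] [CompleteSpace X]
    (f : X → ℂ) (hf : DifferentiableOn ℂ f (ball (0 : X) 1)) (hf0 : f 0 = 1)
    (F : X → X) (hF : ∀ x ∈ ball (0 : X) 1, F x = f x • x)
    (G : X → X) (hG : ∀ x ∈ ball (0 : X) 1, G x = fderiv ℂ F x x) :
    (∀ x ∈ ball (0 : X) 1, x ≠ 0 →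
        ∃ A : X →L[ℂ] X,
          A.comp (fderiv ℂ F x) = ContinuousLinearMap.id ℂ X ∧
          (fderiv ℂ F x).comp A = ContinuousLinearMap.id ℂ X ∧
          ∀ l : X →L[ℂ] ℂ, l x = (‖x‖ : ℂ) → ‖l‖ = 1 →
            0 < (l (A (iteratedFDeriv ℂ 2 F x ![x, x] + fderiv ℂ F x x))).re)
      ↔ IsStarlikeOn G (ball (0 : X) 1) := by
  set g : X → ℂ := fun x => f x + fderiv ℂ f x x with hgdef
  have hf' : ∀ x ∈ ball (0 : X) 1, DifferentiableAt ℂ (fderiv ℂ f) x := fun x hx =>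
    hol_fderiv_differentiableAt isOpen_ball hf hx
  have hg : DifferentiableOn ℂ g (ball (0 : X) 1) := fun x hx =>
    ((hf.differentiableAt (isOpen_ball.mem_nhds hx)).add
      ((hf' x hx).clm_apply differentiableAt_id)).differentiableWithinAt
  have hg0 : g 0 = 1 := by simp [hgdef, hf0]
  have hFd : ∀ x ∈ ball (0 : X) 1, fderiv ℂ F x
      = f x • ContinuousLinearMap.id ℂ X + (fderiv ℂ f x).smulRight x := fun x hx =>
    (hasFDerivAt_smul_self hf hF hx).fderiv
  have hFdiff : DifferentiableOn ℂ F (ball (0 : X) 1) := fun x hx =>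
    (hasFDerivAt_smul_self hf hF hx).differentiableAt.differentiableWithinAt
  have hFx : ∀ x ∈ ball (0 : X) 1, fderiv ℂ F x x = g x • x := by
    intro x hx
    rw [hFd x hx]
    simp [hgdef, add_smul]
  have hG' : ∀ x ∈ ball (0 : X) 1, G x = g x • x := fun x hx => by rw [hG x hx, hFx x hx]
  have hF2 : ∀ x ∈ ball (0 : X) 1, iteratedFDeriv ℂ 2 F x ![x, x] + fderiv ℂ F x x
      = (g x + fderiv ℂ g x x) • x := by
    intro x hx
    have h1 : HasFDerivAt G _ x :=
      ((hol_fderiv_differentiableAt isOpen_ball hFdiff hx).hasFDerivAt.clm_apply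
        (hasFDerivAt_id x)).congr_of_eventuallyEq (by
          filter_upwards [isOpen_ball.mem_nhds hx] with y hy
          exact hG y hy)
    have h2 := DFunLike.congr_fun (h1.unique (hasFDerivAt_smul_self hg hG' hx)) x
    rw [iteratedFDeriv_two_apply]
    simp only [ContinuousLinearMap.add_apply, ContinuousLinearMap.comp_apply,
      ContinuousLinearMap.id_apply, ContinuousLinearMap.flip_apply, id_eq,
      ContinuousLinearMap.smul_apply, ContinuousLinearMap.smulRight_apply] at h2
    rw [add_smul, ← h2]
    simp [add_comm]
  have hAx : ∀ x ∈ ball (0 : X) 1, g x ≠ 0 → ∀ A : X →L[ℂ] X,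
      A.comp (fderiv ℂ F x) = ContinuousLinearMap.id ℂ X → ∀ l : X →L[ℂ] ℂ, l x = (‖x‖ : ℂ) →
      (l (A (iteratedFDeriv ℂ 2 F x ![x, x] + fderiv ℂ F x x))).re
        = ‖x‖ * (1 + fderiv ℂ g x x / g x).re := by
    intro x hx hgx A hA l hl
    have h1 : A (g x • x) = x := by
      rw [← hFx x hx]
      exact DFunLike.congr_fun hA x
    have h2 : A x = (g x)⁻¹ • x := by
      rw [map_smul] at h1
      rw [← inv_smul_smul₀ hgx (A x), h1]
    rw [hF2 x hx, map_smul, h2, map_smul, map_smul, hl, smul_eq_mul, smul_eq_mul,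
      ← Complex.re_ofReal_mul]
    congr 1
    field_simp
  constructor
  · intro ha
    have hne : ∀ x ∈ ball (0 : X) 1, g x ≠ 0 := by
      intro x hx h
      by_cases hx0 : x = 0
      · rw [hx0, hg0] at h
        exact one_ne_zero h
      · obtain ⟨A, hA, -, -⟩ := ha x hx hx0
        have h1 : A (fderiv ℂ F x x) = x := DFunLike.congr_fun hA x
        rw [hFx x hx, h, zero_smul, map_zero] at h1
        exact hx0 h1.symm
    refine star_forward hg hg0 hG' hne (fun x hx => ?_)
    by_cases hx0 : x = 0
    · simp [hx0]
    obtain ⟨A, hA, -, hl⟩ := ha x hx hx0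
    obtain ⟨l, hl1, hlx⟩ := exists_dual_vector ℂ x (norm_ne_zero_iff.2 hx0)
    have h1 := hl l hlx hl1
    rw [hAx x hx (hne x hx) A hA l hlx] at h1
    exact pos_of_mul_pos_right h1 (norm_nonneg x)
  · intro hst x hx hx0
    obtain ⟨hfx, hgx, hpos⟩ := star_backward hf hg hg0 (fun _ _ => rfl) hG' hst x hx hx0
    obtain ⟨A, hA1, hA2⟩ := rank_one (f x) (fderiv ℂ f x) x hfx hgx
    rw [← hFd x hx] at hA1 hA2
    refine ⟨A, hA1, hA2, fun l hl _ => ?_⟩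
    rw [hAx x hx hgx A hA1 l hl]
    exact mul_pos (norm_pos_iff.2 hx0) hpos
end
end

section
/- Let v ∈ X with ‖v‖ = 1 and let l_v : X → ℂ be a continuous linear functional with l_v(v) = ‖v‖ = 1 and ‖l_v‖ = 1. Define F : 𝔹 → X by F(x) = (1 − l_v(x))^{−2}·x. Then F is biholomorphic on 𝔹 and DF(0) = I, and for each s ≥ 1 the s-th homogeneous Taylor term of F satisfies (1/s!)·DˢF(0)(v,…,v) = s·v. -/
open Metric Set

noncomputable section

/-- The explicit inverse of the Koebe-type mapping. -/
def koebeInv {X : Type*} [NormedAddCommGroup X] [NormedSpace ℂ X] (lv : X →L[ℂ] ℂ) (y : X) : X :=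
  (4 / ((1 + 4 * lv y) ^ (2⁻¹ : ℂ) + 1) ^ 2) • y

theorem one_sub_ne_zero_of_norm {z : ℂ} (hz : ‖z‖ < 1) : 1 - z ≠ 0 := by
  intro h
  have : z = 1 := (sub_eq_zero.mp h).symm
  simp [this] at hz

theorem cayley_re_pos {z : ℂ} (hz : ‖z‖ < 1) : 0 < ((1 + z) / (1 - z)).re := by
  have hne := one_sub_ne_zero_of_norm hz
  have h2 : Complex.normSq z < 1 := by
    rw [Complex.normSq_eq_norm_sq]
    nlinarith [norm_nonneg z]
  have h3 : 0 < Complex.normSq (1 - z) := Complex.normSq_pos.mpr hne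
  rw [Complex.div_re, ← add_div]
  apply div_pos _ h3
  rw [Complex.normSq_apply] at h2
  simp
  nlinarith

theorem sq_mem_slitPlane_of_re_pos {p : ℂ} (hp : 0 < p.re) : p ^ 2 ∈ Complex.slitPlane := by
  rw [Complex.mem_slitPlane_iff]
  by_cases h : p.im = 0
  · left
    simp [pow_two, h]
    positivity
  · right
    have : (p ^ 2).im = 2 * (p.re * p.im) := by
      simp [pow_two]
      ring
    rw [this]
    exact mul_ne_zero two_ne_zero (mul_ne_zero (ne_of_gt hp) h)

/-- **The Koebe-type extremal mapping.** Let `v ∈ X` with `‖v‖ = 1` and let `l_v` be a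
continuous linear functional with `l_v(v) = 1` and `‖l_v‖ = 1`. Define
`F(x) = (1 − l_v(x))⁻²·x` on the unit ball `𝔹`. Then `F` is biholomorphic on `𝔹`,
`DF(0) = I`, and for each `s ≥ 1` the `s`-th homogeneous Taylor term of `F` satisfies
`(1/s!)·DˢF(0)(v,…,v) = s·v`. -/
theorem stmt18 {X : Type*} [NormedAddCommGroup X] [NormedSpace ℂ X] [CompleteSpace X]
    (v : X) (hv : ‖v‖ = 1)
    (lv : X →L[ℂ] ℂ) (hlv : lv v = 1) (hlvnorm : ‖lv‖ = 1)
    (F : X → X) (hF : ∀ x ∈ ball (0 : X) 1, F x = ((1 - lv x) ^ 2)⁻¹ • x) :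
    IsBiholoOn F (ball (0 : X) 1) ∧
      fderiv ℂ F 0 = ContinuousLinearMap.id ℂ X ∧
      ∀ s : ℕ, 1 ≤ s →
        ((s.factorial : ℂ))⁻¹ • iteratedFDeriv ℂ s F 0 (fun _ => v) = (s : ℂ) • v := by
  have hnv : ∀ x ∈ ball (0 : X) 1, ‖lv x‖ < 1 := by
    intro x hx
    have h1 := lv.le_opNorm x
    rw [hlvnorm, one_mul] at h1
    exact lt_of_le_of_lt h1 (by simpa using hx)
  have hdF : ∀ x ∈ ball (0 : X) 1, DifferentiableAt ℂ F x := by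
    intro x hx
    have hne := one_sub_ne_zero_of_norm (hnv x hx)
    have hG : DifferentiableAt ℂ (fun x => ((1 - lv x) ^ 2)⁻¹ • x) x := by
      apply DifferentiableAt.fun_smul _ differentiableAt_id
      apply DifferentiableAt.fun_inv
      · fun_prop
      · exact pow_ne_zero 2 hne
    refine hG.congr_of_eventuallyEq ?_
    filter_upwards [isOpen_ball.mem_nhds hx] with y hy using hF y hy
  have hginv : ∀ x ∈ ball (0 : X) 1, koebeInv lv (F x) = x := by
    intro x hx
    have hz := hnv x hx
    have hne := one_sub_ne_zero_of_norm hz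
    have hw : 1 + 4 * lv (F x) = ((1 + lv x) / (1 - lv x)) ^ 2 := by
      rw [hF x hx, map_smul, smul_eq_mul]
      field_simp
      ring
    unfold koebeInv
    rw [hw, Complex.sq_cpow_two_inv (cayley_re_pos hz), hF x hx, smul_smul]
    have : (4 / ((1 + lv x) / (1 - lv x) + 1) ^ 2) * ((1 - lv x) ^ 2)⁻¹ = 1 := by
      have : (1 + lv x) / (1 - lv x) + 1 = 2 / (1 - lv x) := by
        field_simp
        ring
      rw [this]
      field_simp
      norm_num
    rw [this, one_smul]
  have h0 : (0 : X) ∈ ball (0 : X) 1 := by simp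
  refine ⟨⟨fun x hx => (hdF x hx).differentiableWithinAt, ?_, koebeInv lv, ?_, hginv⟩, ?_, ?_⟩
  · intro x hx y hy hxy
    rw [← hginv x hx, ← hginv y hy, hxy]
  · rintro _ ⟨x, hx, rfl⟩
    apply DifferentiableAt.differentiableWithinAt
    have hz := hnv x hx
    have hne := one_sub_ne_zero_of_norm hz
    have hw : 1 + 4 * lv (F x) = ((1 + lv x) / (1 - lv x)) ^ 2 := by
      rw [hF x hx, map_smul, smul_eq_mul]
      field_simp
      ring
    have hp := cayley_re_pos hz
    unfold koebeInv
    apply DifferentiableAt.fun_smul _ differentiableAt_id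
    simp only [div_eq_mul_inv]
    apply DifferentiableAt.const_mul
    apply DifferentiableAt.fun_inv
    · apply DifferentiableAt.fun_pow
      apply DifferentiableAt.add_const
      apply DifferentiableAt.cpow_const
      · fun_prop
      · rw [hw]
        exact sq_mem_slitPlane_of_re_pos hp
    · rw [hw, Complex.sq_cpow_two_inv hp]
      apply pow_ne_zero
      intro h
      have := congrArg Complex.re h
      simp only [Complex.add_re, Complex.one_re, Complex.zero_re] at this
      linarith
  · have hc : DifferentiableAt ℂ (fun x : X => ((1 - lv x) ^ 2)⁻¹) 0 := by
      apply DifferentiableAt.fun_inv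
      · fun_prop
      · simp
    have hG := hc.hasFDerivAt.fun_smul (hasFDerivAt_id (𝕜 := ℂ) (0 : X))
    have hFG : F =ᶠ[nhds 0] (fun x => ((1 - lv x) ^ 2)⁻¹ • id x) := by
      filter_upwards [isOpen_ball.mem_nhds h0] with y hy using hF y hy
    rw [(hG.congr_of_eventuallyEq hFG).fderiv]
    ext y
    simp
  · intro s _
    have hA : AnalyticAt ℂ F 0 := by
      have hG : AnalyticAt ℂ (fun x => ((1 - lv x) ^ 2)⁻¹ • x) 0 := by
        apply AnalyticAt.fun_smul _ analyticAt_id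
        apply AnalyticAt.fun_inv
        · exact (analyticAt_const.fun_sub (lv.analyticAt 0)).fun_pow 2
        · simp
      refine hG.congr ?_
      filter_upwards [isOpen_ball.mem_nhds h0] with y hy using (hF y hy).symm
    obtain ⟨p, r, hp⟩ := hA
    rw [← hp.factorial_smul v s, ← Nat.cast_smul_eq_nsmul ℂ, smul_smul,
      inv_mul_cancel₀ (by exact_mod_cast s.factorial_ne_zero), one_smul]
    let P : FormalMultilinearSeries ℂ ℂ X := fun n =>
      ContinuousMultilinearMap.mkPiRing ℂ (Fin n) (p n (fun _ => v))
    let Q : FormalMultilinearSeries ℂ ℂ X := fun n =>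
      ContinuousMultilinearMap.mkPiRing ℂ (Fin n) ((n : ℂ) • v)
    have hPc : ∀ n, P.coeff n = p n (fun _ => v) := by
      intro n
      simp [P, FormalMultilinearSeries.coeff]
    have hQc : ∀ n, Q.coeff n = (n : ℂ) • v := by
      intro n
      simp [Q, FormalMultilinearSeries.coeff]
    have hP : HasFPowerSeriesAt (fun t : ℂ => F (t • v)) P 0 := by
      rw [hasFPowerSeriesAt_iff]
      have hcont : Filter.Tendsto (fun t : ℂ => t • v) (nhds 0) (nhds 0) := by
        have : Continuous (fun t : ℂ => t • v) := by fun_prop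
        simpa using this.tendsto 0
      filter_upwards [hcont.eventually (Metric.eball_mem_nhds (0 : X) hp.r_pos)] with t ht
      have := hp.hasSum ht
      simp only [zero_add] at this ⊢
      convert this using 2 with n
      rw [hPc, (p n).map_smul_univ (fun _ => t) (fun _ => v)]
      simp
    have hQ : HasFPowerSeriesAt (fun t : ℂ => F (t • v)) Q 0 := by
      rw [hasFPowerSeriesAt_iff]
      filter_upwards [ball_mem_nhds (0 : ℂ) one_pos] with t ht
      have ht' : ‖t‖ < 1 := by simpa using ht
      have := (hasSum_coe_mul_geometric_of_norm_lt_one ht').smul_const v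
      rw [zero_add, hF (t • v) (by simpa [norm_smul, hv] using ht')]
      convert this using 1
      · funext n
        rw [hQc, smul_smul, mul_comm]
      · rw [map_smul, hlv, smul_smul, smul_eq_mul, mul_one, div_eq_mul_inv, mul_comm]
    have := hP.eq_formalMultilinearSeries hQ
    rw [← hPc, ← hQc, this]
end
end
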